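/- Let F=(f₁,f₂) be smooth functions on a neighborhood of 0 in ℝ⁴ with {f₁,f₂}=0, f₁ = a·q₁ + b·q₂ + O(3), f₂ = c·q₁ + d·q₂ + O(3), where ((a,b),(c,d)) is an invertible 2×2 matrix. Then there exist a local symplectomorphism χ of (ℝ⁴,0) tangent to the identity (χ*ω₀=ω₀, χ(0)=0, Dχ(0)=Id), and a smooth local diffeomorphism G̃:(ℝ²,0)→(ℝ²,0) whose derivative at 0 is the matrix ((a,b),(c,d)), such that F∘χ − G̃∘(q₁,q₂) is flat at the origin. -/

import Mathlib

open Filter Topology Set MeasureTheory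

noncomputable section

/-- ℝ⁴ with coordinates `(x₁, ξ₁, x₂, ξ₂) = (p 0, p 1, p 2, p 3)`. -/
abbrev E4 : Type := Fin 4 → ℝ

/-- ℝ². -/
abbrev E2 : Type := Fin 2 → ℝ

/-- The focus-focus quadratic form `q₁ = x₁ξ₁ + x₂ξ₂`. -/
def q1 (p : E4) : ℝ := p 0 * p 1 + p 2 * p 3

/-- The focus-focus quadratic form `q₂ = x₁ξ₂ − x₂ξ₁`. -/
def q2 (p : E4) : ℝ := p 0 * p 3 - p 2 * p 1

/-- The map `q = (q₁, q₂) : ℝ⁴ → ℝ²`. -/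
def qmap (p : E4) : E2 := ![q1 p, q2 p]

/-- Partial derivative of `f` in the `i`-th coordinate direction. -/
def pd (i : Fin 4) (f : E4 → ℝ) (p : E4) : ℝ := fderiv ℝ f p (Pi.single i 1)

/-- Poisson bracket for the canonical symplectic form `ω₀ = dξ₁∧dx₁ + dξ₂∧dx₂`. -/
def pois (f g : E4 → ℝ) (p : E4) : ℝ :=
  pd 1 f p * pd 0 g p - pd 0 f p * pd 1 g p + pd 3 f p * pd 2 g p - pd 2 f p * pd 3 g p

/-- The canonical symplectic form `ω₀` as a bilinear form on ℝ⁴. -/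
def omega0 (u v : E4) : ℝ := u 1 * v 0 - u 0 * v 1 + u 3 * v 2 - u 2 * v 3

/-- A map is flat at a point if all its iterated derivatives vanish there. -/
def flatAt {E F : Type*} [NormedAddCommGroup E] [NormedSpace ℝ E]
    [NormedAddCommGroup F] [NormedSpace ℝ F] (f : E → F) (x : E) : Prop :=
  ∀ n : ℕ, iteratedFDeriv ℝ n f x = 0

set_option linter.unusedSectionVars false
open Asymptotics


/-- Order of vanishing at the origin. -/
def OO {E F : Type} [NormedAddCommGroup E] [NormedAddCommGroup F] (N : ℕ) (g : E → F) : Prop :=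
  g =O[𝓝 0] fun x => ‖x‖ ^ N

/-- globally smooth -/
def SM {E F : Type} [NormedAddCommGroup E] [NormedSpace ℝ E] [NormedAddCommGroup F]
    [NormedSpace ℝ F] (g : E → F) : Prop := ContDiff ℝ (⊤ : ℕ∞) g

section general
variable {E F : Type} [NormedAddCommGroup E] [NormedSpace ℝ E] [NormedAddCommGroup F]
    [NormedSpace ℝ F]

theorem OO.mono {g : E → F} {M N : ℕ} (h : OO N g) (hMN : M ≤ N) : OO M g := by
  refine h.trans ?_
  refine IsBigO.of_bound 1 ?_
  filter_upwards [Metric.ball_mem_nhds (0:E) one_pos] with x hx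
  simp only [Metric.mem_ball, dist_zero_right] at hx
  simp only [norm_pow, norm_norm, one_mul]
  exact pow_le_pow_of_le_one (norm_nonneg _) hx.le hMN

theorem OO.add {g h : E → F} {N : ℕ} (hg : OO N g) (hh : OO N h) : OO N (fun x => g x + h x) :=
  IsBigO.add hg hh

theorem OO.sub {g h : E → F} {N : ℕ} (hg : OO N g) (hh : OO N h) : OO N (fun x => g x - h x) :=
  IsBigO.sub hg hh

theorem OO.neg {g : E → F} {N : ℕ} (hg : OO N g) : OO N (fun x => - g x) :=
  IsBigO.neg_left hg

theorem OO.mul {g h : E → ℝ} {M N : ℕ} (hg : OO M g) (hh : OO N h) :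
    OO (M + N) (fun x => g x * h x) := by
  have := IsBigO.mul hg hh
  simpa only [OO, pow_add] using this

theorem OO.congr' {g h : E → F} {N : ℕ} (hg : OO N g) (hh : ∀ᶠ x in 𝓝 0, g x = h x) : OO N h :=
  IsBigO.congr' hg hh EventuallyEq.rfl

theorem OO.zero_at {g : E → F} {N : ℕ} (hg : OO (N+1) g) : g 0 = 0 := by
  have := IsBigO.eq_zero_imp hg
  exact this.self_of_nhds (by simp)

theorem OO_zero_of_continuous {g : E → F} (hg : Continuous g) : OO 0 g := by
  have := (hg.tendsto 0).isBigO_one ℝ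
  simpa [OO] using this

theorem OO_id : OO 1 (fun x : E => x) := by
  simpa [OO] using (isBigO_refl (fun x : E => x) (𝓝 0)).norm_right

/-- composition -/
theorem OO.comp {G : Type} [NormedAddCommGroup G] [NormedSpace ℝ G] {g : E → F} {N M : ℕ} (hg : OO N g) {A : G → E}
    (hA : OO M A) (hc : Tendsto A (𝓝 0) (𝓝 0)) : OO (M * N) (fun x => g (A x)) := by
  refine (hg.comp_tendsto hc).trans ?_
  have := (hA.norm_left).pow N
  simp only [pow_mul]
  exact this

theorem OO.tendsto {g : E → F} {N : ℕ} (hg : OO (N+1) g) : Tendsto g (𝓝 0) (𝓝 0) := by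
  refine hg.trans_tendsto ?_
  have : Continuous (fun x : E => ‖x‖ ^ (N+1)) := by fun_prop
  simpa using this.tendsto 0

theorem OO.comp1 {G : Type} [NormedAddCommGroup G] [NormedSpace ℝ G] {g : E → F} {N : ℕ} (hg : OO N g) {A : G → E}
    (hA : OO 1 A) : OO N (fun x => g (A x)) := by
  have := hg.comp hA (OO.tendsto (N := 0) hA)
  simpa using this

theorem SM.fderiv {g : E → F} (hg : SM g) : SM (fderiv ℝ g) := by
  unfold SM at *
  exact hg.fderiv_right (by simp)

theorem SM.diff {g : E → F} (hg : SM g) : Differentiable ℝ g := ContDiff.differentiable hg (by simp)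

theorem SM.ofNat {g : E → F} (hg : SM g) (n : ℕ) : ContDiff ℝ n g :=
  ContDiff.of_le hg (by exact_mod_cast le_top)

theorem taylor_OO [CompleteSpace F] {g : E → F} (hg : SM g) (n : ℕ) :
    OO (n+1) (fun y => g y - ∑ k ∈ Finset.range (n + 1),
      (k.factorial : ℝ)⁻¹ • (iteratedFDeriv ℝ k g 0 (fun _ ↦ y))) := by
  have hcont : Continuous (iteratedFDeriv ℝ (n+1) g) :=
    (hg.ofNat (n+1)).continuous_iteratedFDeriv (by norm_cast)
  obtain ⟨δ, hδ, hb⟩ := Metric.continuousAt_iff.1 (hcont.continuousAt (x := 0)) 1 one_pos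
  set C := ‖iteratedFDeriv ℝ (n+1) g 0‖ + 1
  refine IsBigO.of_bound (((n.factorial : ℝ)⁻¹) * C) ?_
  filter_upwards [Metric.ball_mem_nhds (0:E) hδ] with y hy
  have hT := map_add_eq_sum_add_integral_iteratedFDeriv (f := g) (x := 0) (y := y) (n := n)
    (fun t _ => (hg.ofNat (n+1)).contDiffAt)
  rw [zero_add] at hT
  rw [hT, add_sub_cancel_left, norm_smul, Real.norm_of_nonneg (by positivity), mul_assoc]
  gcongr
  have hy' : ‖y‖ < δ := by simpa using hy
  have := intervalIntegral.norm_integral_le_of_norm_le_const (a := 0) (b := 1)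
    (f := fun t : ℝ => (1 - t)^n • iteratedFDeriv ℝ (n + 1) g (0 + t • y) (fun _ ↦ y))
    (C := C * ‖y‖^(n+1)) ?_
  · simpa using this
  · intro t ht
    rw [Set.uIoc_of_le zero_le_one] at ht
    rw [norm_smul]
    have h1 : ‖(1 - t)^n‖ ≤ 1 := by
      rw [norm_pow, Real.norm_of_nonneg (by linarith [ht.2])]
      exact pow_le_one₀ (by linarith [ht.2]) (by linarith [ht.1])
    have h2 : ‖iteratedFDeriv ℝ (n + 1) g (0 + t • y)‖ ≤ C := by
      have : dist (0 + t • y) 0 < δ := by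
        rw [zero_add, dist_zero_right, norm_smul, Real.norm_of_nonneg ht.1.le]
        nlinarith [norm_nonneg y, ht.1, ht.2]
      have h3 := hb this
      rw [dist_eq_norm] at h3
      have := norm_sub_norm_le (iteratedFDeriv ℝ (n + 1) g (0 + t • y)) (iteratedFDeriv ℝ (n + 1) g 0)
      simp only [C]; linarith
    have h4 := (iteratedFDeriv ℝ (n + 1) g (0 + t • y)).le_opNorm (fun _ => y)
    simp only [Finset.prod_const, Finset.card_univ, Fintype.card_fin] at h4
    calc _ ≤ 1 * (C * ‖y‖^(n+1)) := by
          gcongr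
          exact h4.trans (by gcongr)
      _ = _ := one_mul _

theorem OO_of_iter [CompleteSpace F] {g : E → F} (hg : SM g) {N : ℕ}
    (h : ∀ k < N, iteratedFDeriv ℝ k g 0 = 0) : OO N g := by
  cases N with
  | zero => exact OO_zero_of_continuous (ContDiff.continuous hg)
  | succ n =>
    have := taylor_OO hg n
    refine this.congr' (Eventually.of_forall fun y => ?_)
    rw [Finset.sum_eq_zero, sub_zero]
    intro k hk
    rw [h k (Finset.mem_range.1 hk)]; simp

/-- leading Taylor term -/
theorem taylor_lead [CompleteSpace F] {g : E → F} (hg : SM g) (n : ℕ)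
    (h : ∀ k < n, iteratedFDeriv ℝ k g 0 = 0) :
    OO (n+1) (fun y => g y - (n.factorial : ℝ)⁻¹ • (iteratedFDeriv ℝ n g 0 (fun _ ↦ y))) := by
  refine (taylor_OO hg n).congr' (Eventually.of_forall fun y => ?_)
  rw [Finset.sum_range_succ, Finset.sum_eq_zero, zero_add]
  intro k hk
  rw [h k (Finset.mem_range.1 hk)]; simp

end general

theorem lead_deriv_zero {E F : Type} [NormedAddCommGroup E] [NormedSpace ℝ E]
    [NormedAddCommGroup F] [NormedSpace ℝ F] {g : E → F} (hg : SM g) {M : ℕ} (h : OO (M+2) g)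
    (P : E → E →L[ℝ] F) (hP : ∀ (t : ℝ) y, P (t • y) = t ^ M • P y)
    (hD : OO (M+1) (fun y => fderiv ℝ g y - P y)) (y : E) : P y = 0 := by
  set R : ℝ := ‖y‖ + 1
  have hR : 0 < R := by positivity
  obtain ⟨C, hC, hb⟩ := hD.exists_pos
  have hb := hb.bound
  obtain ⟨δ, hδ, hb⟩ := Metric.eventually_nhds_iff.1 hb
  have key : HasFDerivAt (fun _ : E => (0:F)) (P y) y := by
    refine hasFDerivAt_of_tendstoUniformlyOn (l := 𝓝[>] (0:ℝ)) (s := Metric.ball 0 R)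
      (f := fun t z => (t ^ (M+1))⁻¹ • g (t • z))
      (f' := fun t z => (t ^ (M+1))⁻¹ • (t • fderiv ℝ g (t • z))) Metric.isOpen_ball ?_ ?_ ?_ ?_
    · rw [Metric.tendstoUniformlyOn_iff]
      intro ε hε
      have e1 : ∀ᶠ t : ℝ in 𝓝[>] (0:ℝ), t < δ / R := 
        nhdsWithin_le_nhds (Iio_mem_nhds (by positivity))
      have e2 : ∀ᶠ t : ℝ in 𝓝[>] (0:ℝ), t < ε / (C * R^(M+1)) := 
        nhdsWithin_le_nhds (Iio_mem_nhds (by positivity))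
      filter_upwards [e1, e2, self_mem_nhdsWithin] with t h1 h2 h0 z hz
      have h0 : 0 < t := h0
      have hz : ‖z‖ < R := by simpa using hz
      rw [lt_div_iff₀ hR] at h1
      rw [lt_div_iff₀ (by positivity)] at h2
      have hn : ‖t • z‖ = t * ‖z‖ := by rw [norm_smul, Real.norm_of_nonneg h0.le]
      have := hb (y := t • z) (by rw [dist_zero_right, hn]; nlinarith [norm_nonneg z])
      rw [hP, norm_pow, norm_norm, hn] at this
      rw [dist_eq_norm, norm_sub_rev]
      have e : (t ^ (M + 1))⁻¹ • t • _root_.fderiv ℝ g (t • z) - P z =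
          (t ^ M)⁻¹ • (_root_.fderiv ℝ g (t • z) - t ^ M • P z) := by
        rw [smul_sub, smul_smul, smul_smul]
        congr 2
        · field_simp; ring
        · rw [inv_mul_cancel₀ (by positivity), one_smul]
      rw [e, norm_smul, Real.norm_of_nonneg (by positivity)]
      calc _ ≤ (t^M)⁻¹ * (C * (t * ‖z‖)^(M+1)) := by gcongr
        _ = t * (C * ‖z‖^(M+1)) := by field_simp; ring
        _ ≤ t * (C * R^(M+1)) := by gcongr
        _ < ε := h2
    · intro t z hz
      have h1 : HasFDerivAt (fun z : E => t • z) (t • ContinuousLinearMap.id ℝ E) z :=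
        (hasFDerivAt_id z).const_smul t
      have h2 := ((hg.diff (t • z)).hasFDerivAt.comp z h1).const_smul ((t ^ (M+1))⁻¹)
      have e : (t ^ (M+1))⁻¹ • ((_root_.fderiv ℝ g (t • z)).comp (t • ContinuousLinearMap.id ℝ E)) =
          (t ^ (M+1))⁻¹ • (t • _root_.fderiv ℝ g (t • z)) := by
        ext v; simp
      rw [← e]
      exact h2
    · intro z hz
      have h1 : OO (M+2) (fun t : ℝ => g (t • z)) := by
        refine h.comp1 ?_
        refine IsBigO.of_bound ‖z‖ (Eventually.of_forall fun t => ?_)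
        rw [norm_smul, pow_one, norm_norm, mul_comm]
      have h2 : (fun t : ℝ => (t ^ (M+1))⁻¹ • g (t • z)) =O[𝓝[>] 0] fun t => t := by
        have h3 : (fun t : ℝ => (t ^ (M+1))⁻¹) =O[𝓝[>] 0] fun t : ℝ => (t ^ (M+1))⁻¹ :=
          isBigO_refl _ _
        have h4 := h3.smul (IsBigO.mono h1 nhdsWithin_le_nhds)
        refine h4.congr' EventuallyEq.rfl ?_
        filter_upwards [self_mem_nhdsWithin] with t ht
        have ht : 0 < t := ht
        rw [Real.norm_of_nonneg ht.le, smul_eq_mul]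
        field_simp
        ring
      exact h2.trans_tendsto (tendsto_nhdsWithin_of_tendsto_nhds tendsto_id)
    · simp [R]
  exact key.unique (hasFDerivAt_const 0 y)

theorem iter_of_OO {E : Type} [NormedAddCommGroup E] [NormedSpace ℝ E] (N : ℕ) :
    ∀ (F : Type) [NormedAddCommGroup F] [NormedSpace ℝ F] [CompleteSpace F] {g : E → F},
    SM g → OO N g → ∀ k < N, iteratedFDeriv ℝ k g 0 = 0 := by
  induction N with
  | zero => intro F _ _ _ g _ _ k hk; omega
  | succ N ih =>
    intro F _ _ _ g hg h k hk
    have h0 := ih F hg (h.mono (Nat.le_succ N))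
    rcases Nat.lt_succ_iff_lt_or_eq.1 hk with hk | rfl
    · exact h0 k hk
    rcases k with _ | M
    · ext; simp [OO.zero_at h]
    have hD : ∀ j < M, iteratedFDeriv ℝ j (fderiv ℝ g) 0 = 0 := by
      intro j hj
      rw [← norm_eq_zero, norm_iteratedFDeriv_fderiv, h0 (j+1) (by omega), norm_zero]
    have hl := taylor_lead hg.fderiv M hD
    have hz := lead_deriv_zero hg h _ ?_ hl
    · have : OO (M+1) (fderiv ℝ g) := by
        refine hl.congr' (Eventually.of_forall fun y => ?_)
        rw [hz y, sub_zero]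
      have := ih (E →L[ℝ] F) hg.fderiv this M (by omega)
      rw [← norm_eq_zero, ← norm_iteratedFDeriv_fderiv, this, norm_zero]
    · intro t y
      have := (iteratedFDeriv ℝ M (fderiv ℝ g) 0).map_smul_univ (fun _ => t) (fun _ => y)
      simp only [Finset.prod_const, Finset.card_univ, Fintype.card_fin] at this
      rw [this, smul_comm]

section general2
variable {E F : Type} [NormedAddCommGroup E] [NormedSpace ℝ E] [NormedAddCommGroup F]
    [NormedSpace ℝ F] [CompleteSpace F]

theorem OO.fderiv {g : E → F} {N : ℕ} (h : OO (N+1) g) (hg : SM g) : OO N (fderiv ℝ g) := by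
  refine OO_of_iter hg.fderiv fun k hk => ?_
  rw [← norm_eq_zero, norm_iteratedFDeriv_fderiv, iter_of_OO (N+1) F hg h (k+1) (by omega), norm_zero]

/-- stability under change of argument -/
theorem OO.comp_sub {G : Type} [NormedAddCommGroup G] [NormedSpace ℝ G] {φ : E → F} (hφ : SM φ) {m k : ℕ}
    (hD : OO m (_root_.fderiv ℝ φ)) {A B : G → E} (hA : OO 1 A) (hB : OO 1 B)
    (hAB : OO k (fun x => A x - B x)) : OO (m + k) (fun x => φ (A x) - φ (B x)) := by
  obtain ⟨C, hC, hb⟩ := hD.exists_pos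
  obtain ⟨a, ha, hba⟩ := hA.exists_pos
  obtain ⟨b, hb0, hbb⟩ := hB.exists_pos
  obtain ⟨e, he, hbe⟩ := hAB.exists_pos
  obtain ⟨δ, hδ, hb⟩ := Metric.eventually_nhds_iff.1 hb.bound
  have hsmall : ∀ᶠ x : G in 𝓝 0, ‖x‖ < δ / (a + b) := by
    have := Metric.ball_mem_nhds (0:G) (show 0 < δ / (a+b) by positivity)
    filter_upwards [this] with x hx; simpa using hx
  refine IsBigO.of_bound (C * (a+b)^m * e) ?_
  filter_upwards [hba.bound, hbb.bound, hbe.bound, hsmall] with x h1 h2 h3 h4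
  simp only [pow_one, norm_norm, norm_pow] at h1 h2 h3 ⊢
  rw [lt_div_iff₀ (by positivity)] at h4
  set r := (a+b) * ‖x‖
  have hr : r < δ := by simp only [r]; linarith
  have hAr : A x ∈ Metric.closedBall (0:E) r := by
    simp only [Metric.mem_closedBall, dist_zero_right, r]; nlinarith [norm_nonneg x]
  have hBr : B x ∈ Metric.closedBall (0:E) r := by
    simp only [Metric.mem_closedBall, dist_zero_right, r]; nlinarith [norm_nonneg x]
  have := (convex_closedBall (0:E) r).norm_image_sub_le_of_norm_fderiv_le (𝕜 := ℝ) (f := φ)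
    (C := C * r^m) (fun y _ => hφ.diff y) ?_ hBr hAr
  · refine this.trans ?_
    calc _ ≤ C * r ^ m * (e * ‖x‖^k) := by gcongr
      _ = _ := by simp only [r, pow_add, mul_pow]; ring
  · intro y hy
    have hy : ‖y‖ ≤ r := by simpa using hy
    have := hb (y := y) (by rw [dist_zero_right]; linarith)
    simp only [norm_pow, norm_norm] at this
    refine this.trans (by gcongr)

end general2


section borel
variable {E F : Type} [NormedAddCommGroup E] [NormedSpace ℝ E] [NormedAddCommGroup F]
    [NormedSpace ℝ F]

theorem OO_of_hom {P : E → F} (hc : Continuous P) {k : ℕ}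
    (hP : ∀ (t : ℝ) x, P (t • x) = t ^ k • P x) : OO k P := by
  obtain ⟨δ, hδ, hb⟩ := Metric.continuousAt_iff.1 (hc.continuousAt (x := 0)) 1 one_pos
  set C := ‖P 0‖ + 1
  have hb' : ∀ x, ‖x‖ < δ → ‖P x‖ ≤ C := by
    intro x hx
    have h3 := hb (x := x) (by simpa using hx)
    rw [dist_eq_norm] at h3
    have := norm_sub_norm_le (P x) (P 0)
    simp only [C]; linarith
  refine IsBigO.of_bound (C * ((δ/2)⁻¹)^k) (Eventually.of_forall fun x => ?_)
  rw [norm_pow, norm_norm]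
  rcases eq_or_ne x 0 with rfl | hx
  · have h0 := hP 0 0
    rcases k with _ | k
    · simpa using hb' 0 (by simpa using hδ)
    · simp at h0; simp [h0]
  · have hx' : 0 < ‖x‖ := norm_pos_iff.2 hx
    have h1 := hP (‖x‖ * (δ/2)⁻¹) ((‖x‖⁻¹ * (δ/2)) • x)
    rw [smul_smul, show ‖x‖ * (δ/2)⁻¹ * (‖x‖⁻¹ * (δ/2)) = 1 by field_simp, one_smul] at h1
    have h2 := hb' ((‖x‖⁻¹ * (δ/2)) • x) (by
      rw [norm_smul, Real.norm_of_nonneg (by positivity)]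
      rw [show ‖x‖⁻¹ * (δ/2) * ‖x‖ = δ/2 by field_simp]; linarith)
    rw [h1, norm_smul, Real.norm_of_nonneg (by positivity), mul_pow]
    calc _ ≤ ‖x‖ ^ k * (δ / 2)⁻¹ ^ k * C := by gcongr
      _ = _ := by ring

theorem hom_zero_of_OO {P : E → F} {k : ℕ}
    (hP : ∀ (t : ℝ) x, P (t • x) = t ^ k • P x) (h : OO (k+1) P) (x : E) : P x = 0 := by
  have h1 : OO (k+1) (fun t : ℝ => P (t • x)) := by
    refine h.comp1 ?_
    refine IsBigO.of_bound ‖x‖ (Eventually.of_forall fun t => ?_)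
    rw [norm_smul, pow_one, norm_norm, mul_comm]
  have h2 : (fun t : ℝ => P x) =O[𝓝[>] 0] fun t : ℝ => t := by
    have h3 : (fun t : ℝ => (t ^ k)⁻¹) =O[𝓝[>] 0] fun t : ℝ => (t ^ k)⁻¹ :=
      isBigO_refl _ _
    have h4 := h3.smul (IsBigO.mono h1 nhdsWithin_le_nhds)
    refine h4.congr' ?_ ?_
    · filter_upwards [self_mem_nhdsWithin] with t ht
      have ht : 0 < t := ht
      rw [hP, smul_smul, inv_mul_cancel₀ (by positivity), one_smul]
    · filter_upwards [self_mem_nhdsWithin] with t ht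
      have ht : 0 < t := ht
      rw [Real.norm_of_nonneg ht.le, smul_eq_mul]
      field_simp
      ring
  have h5 := h2.trans_tendsto (tendsto_nhdsWithin_of_tendsto_nhds tendsto_id)
  exact tendsto_nhds_unique tendsto_const_nhds h5

/-- One bump-rescaled term of the Borel series. -/
theorem borel_term [FiniteDimensional ℝ E] {P : E → F} (hs : SM P) (k : ℕ)
    (hP : ∀ (t : ℝ) x, P (t • x) = t ^ k • P x) :
    ∃ h : E → F, SM h ∧ (∀ᶠ x in 𝓝 0, h x = P x) ∧
      ∀ j < k, ∀ x, ‖iteratedFDeriv ℝ j h x‖ ≤ (1/2 : ℝ) ^ k := by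
  let φ : ContDiffBump (0:E) := ⟨1, 2, by norm_num, by norm_num⟩
  set ψ : E → F := fun x => φ x • P x with hψ
  have hψs : SM ψ := ContDiff.smul φ.contDiff hs
  have hψc : HasCompactSupport ψ := φ.hasCompactSupport.smul_right
  have hC : ∀ j : ℕ, ∃ C : ℝ, ∀ x, ‖iteratedFDeriv ℝ j ψ x‖ ≤ C := fun j =>
    ((hψs.ofNat j).continuous_iteratedFDeriv le_rfl).bounded_above_of_compact_support
      (hψc.iteratedFDeriv j)
  choose C hC using hC
  have hC0 : ∀ j, 0 ≤ C j := fun j => (norm_nonneg _).trans (hC j 0)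
  set l : ℝ := 1 + 2 ^ k * ∑ j ∈ Finset.range k, C j with hl
  have hl1 : 1 ≤ l := by
    have : 0 ≤ ∑ j ∈ Finset.range k, C j := Finset.sum_nonneg fun j _ => hC0 j
    rw [hl]; nlinarith [mul_nonneg (pow_nonneg (zero_le_two (α := ℝ)) k) this]
  have hl0 : 0 < l := by linarith
  let L : E →L[ℝ] E := l • ContinuousLinearMap.id ℝ E
  refine ⟨fun x => (l ^ k)⁻¹ • (ψ ∘ L) x, ?_, ?_, ?_⟩
  · exact ContDiff.const_smul _ (ContDiff.comp hψs L.contDiff)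
  · filter_upwards [Metric.ball_mem_nhds (0:E) (show 0 < l⁻¹ by positivity)] with x hx
    have hx : ‖x‖ < l⁻¹ := by simpa using hx
    have : φ (l • x) = 1 := by
      apply φ.one_of_mem_closedBall
      simp only [Metric.mem_closedBall, dist_zero_right, norm_smul, φ, Real.norm_of_nonneg hl0.le]
      rw [inv_eq_one_div, lt_div_iff₀ hl0] at hx
      linarith
    simp only [Function.comp, L, smul_apply, ContinuousLinearMap.id_apply, hψ,
      this, hP, smul_smul, one_mul]
    rw [inv_mul_cancel₀ (by positivity), one_smul]
  · intro j hj x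
    have e : iteratedFDeriv ℝ j (fun x => (l ^ k)⁻¹ • (ψ ∘ L) x) x =
        (l ^ k)⁻¹ • iteratedFDeriv ℝ j (ψ ∘ L) x :=
      iteratedFDeriv_const_smul_apply
        (((hψs.ofNat j).comp (L.contDiff)).contDiffAt)
    rw [e, L.iteratedFDeriv_comp_right hψs x (by exact_mod_cast le_top), norm_smul,
      Real.norm_of_nonneg (by positivity)]
    have h1 := (iteratedFDeriv ℝ j ψ (L x)).norm_compContinuousLinearMap_le (fun _ => L)
    have hL : ‖L‖ ≤ l := by
      refine ContinuousLinearMap.opNorm_le_bound _ hl0.le fun v => ?_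
      simp [L, norm_smul, abs_of_pos hl0]
    simp only [Finset.prod_const, Finset.card_univ, Fintype.card_fin] at h1
    have h2 : C j ≤ ∑ j ∈ Finset.range k, C j :=
      Finset.single_le_sum (fun i _ => hC0 i) (Finset.mem_range.2 hj)
    have h3 : l ^ j * l ≤ l ^ k := by
      rw [← pow_succ]; exact pow_le_pow_right₀ hl1 hj
    have h4 : 2 ^ k * C j ≤ l := by
      rw [hl]
      have : (2:ℝ) ^ k * C j ≤ 2 ^ k * ∑ j ∈ Finset.range k, C j := by gcongr
      linarith
    calc (l ^ k)⁻¹ * _ ≤ (l ^ k)⁻¹ * (C j * l ^ j) := by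
          gcongr
          refine h1.trans ?_
          gcongr
          · exact hC0 j
          · exact hC j _
      _ ≤ (l ^ k)⁻¹ * (((1/2)^k * l) * l ^ j) := by
          gcongr
          rw [one_div, inv_pow, inv_mul_eq_div, le_div_iff₀ (by positivity)]; linarith
      _ = (l ^ k)⁻¹ * ((1/2)^k * (l ^ j * l)) := by ring
      _ ≤ (l ^ k)⁻¹ * ((1/2)^k * l ^ k) := by gcongr
      _ = _ := by field_simp

theorem borel_series [FiniteDimensional ℝ E] [CompleteSpace F] (P : ℕ → E → F) (hs : ∀ k, SM (P k))
    (hP : ∀ k (t : ℝ) x, P k (t • x) = t ^ k • P k x) :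
    ∃ f : E → F, SM f ∧ ∀ n, OO n (fun x => f x - ∑ k ∈ Finset.range n, P k x) := by
  choose h h1 h2 h3 using fun k => borel_term (hs k) k (hP k)
  have hsum : Summable (fun k : ℕ => (1/2 : ℝ) ^ k) := summable_geometric_two
  have hf : SM (fun x => ∑' k, h k x) := by
    refine contDiff_tsum_of_eventually (v := fun _ k => (1/2 : ℝ) ^ k) h1 (fun _ _ => hsum) ?_
    intro j _
    rw [Nat.cofinite_eq_atTop]
    filter_upwards [eventually_gt_atTop j] with k hk x
    exact h3 k j hk x
  refine ⟨_, hf, fun n => ?_⟩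
  rcases n with _ | n
  · exact (OO_zero_of_continuous (ContDiff.continuous hf)).congr' (by simp)
  have hsm : ∀ x, Summable (fun k => h k x) := by
    intro x
    refine Summable.of_norm_bounded_eventually_nat (g := fun k => (1/2 : ℝ) ^ k) hsum ?_
    filter_upwards [eventually_gt_atTop 0] with k hk
    simpa using h3 k 0 hk x
  have htail : ∀ x, ∑' k, h k x - ∑ k ∈ Finset.range (n+1), h k x = ∑' k, h (k + (n+1)) x := by
    intro x
    rw [← (hsm x).sum_add_tsum_nat_add (n+1), add_sub_cancel_left]
  have hts : SM (fun x => ∑' k, h (k + (n+1)) x) := by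
    simp only [← htail]
    exact ContDiff.sub hf (ContDiff.sum fun k _ => h1 k)
  have hOO : OO (n+1) (fun x => ∑' k, h (k + (n+1)) x) := by
    refine OO_of_iter hts fun j hj => ?_
    rw [iteratedFDeriv_tsum_apply (N := n) (v := fun _ k => (1/2 : ℝ) ^ (k + (n+1)))
      (fun i => (h1 _).ofNat n) (fun _ _ => (summable_nat_add_iff (n+1)).2 hsum) ?_ 
      (by exact_mod_cast Nat.lt_succ_iff.1 hj)]
    · have : ∀ k, iteratedFDeriv ℝ j (h (k + (n+1))) 0 = 0 := by
        intro k
        refine iter_of_OO (k + (n+1)) F (h1 _) ?_ j (by omega)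
        refine (OO_of_hom (ContDiff.continuous (hs _)) (hP _)).congr' ?_
        filter_upwards [h2 (k + (n+1))] with x hx using hx.symm
      simp [this]
    · intro m i x hm
      have hm : m ≤ n := by exact_mod_cast hm
      exact h3 _ _ (by omega) x
  refine hOO.congr' ?_
  have : ∀ᶠ x in 𝓝 (0:E), ∀ k ∈ Finset.range (n+1), h k x = P k x :=
    (eventually_all_finset _).2 fun k _ => h2 k
  filter_upwards [this] with x hx
  rw [← htail, Finset.sum_congr rfl hx]

end borel


open MvPolynomial in
/-- The diagonal derivation `X i ↦ w i * X i`. -/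
def diagD (w : Fin 4 → ℂ) (P : MvPolynomial (Fin 4) ℂ) : MvPolynomial (Fin 4) ℂ :=
  ∑ i, C (w i) * (X i * pderiv i P)

/-- weight of a monomial -/
def wt (w : Fin 4 → ℂ) (m : Fin 4 →₀ ℕ) : ℂ := ∑ i, w i * (m i : ℂ)

open MvPolynomial in
theorem coeff_diagD (w : Fin 4 → ℂ) (P : MvPolynomial (Fin 4) ℂ) (m : Fin 4 →₀ ℕ) :
    coeff m (diagD w P) = wt w m * coeff m P := by
  induction P using MvPolynomial.induction_on' with
  | monomial u a =>
    simp only [diagD, wt, X_mul_pderiv_monomial, coeff_sum, coeff_C_mul, coeff_smul, coeff_monomial,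
      Finset.sum_mul]
    refine Finset.sum_congr rfl fun i _ => ?_
    split_ifs with h
    · subst h; simp; ring
    · simp
  | add p q hp hq =>
    have : diagD w (p + q) = diagD w p + diagD w q := by
      simp [diagD, mul_add, Finset.sum_add_distrib]
    rw [this, coeff_add, coeff_add, hp, hq, mul_add]

/-- complex coordinates, as a real-linear map -/
def zlin : E4 →L[ℝ] (Fin 4 → ℂ) :=
  LinearMap.toContinuousLinearMap
  { toFun := fun p => ![(p 0 : ℂ) + Complex.I * p 2, (p 0 : ℂ) - Complex.I * p 2,
      (p 1 : ℂ) + Complex.I * p 3, (p 1 : ℂ) - Complex.I * p 3]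
    map_add' := by
      intro x y; ext i; fin_cases i <;> simp <;> ring
    map_smul' := by
      intro t x; ext i; fin_cases i <;> simp <;> ring }

theorem zlin_apply (p : E4) : zlin p = ![(p 0 : ℂ) + Complex.I * p 2, (p 0 : ℂ) - Complex.I * p 2,
      (p 1 : ℂ) + Complex.I * p 3, (p 1 : ℂ) - Complex.I * p 3] := rfl

/-- evaluation in complex coordinates -/
def ev (P : MvPolynomial (Fin 4) ℂ) (p : E4) : ℂ := MvPolynomial.eval (zlin p) P

/-- derivative of the evaluation -/
def evD (P : MvPolynomial (Fin 4) ℂ) (p : E4) : E4 →L[ℝ] ℂ :=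
  ∑ i, (ev (MvPolynomial.pderiv i P) p) • ((ContinuousLinearMap.proj (R := ℝ) i).comp zlin)

theorem evD_apply (P : MvPolynomial (Fin 4) ℂ) (p v : E4) :
    evD P p v = ∑ i, MvPolynomial.eval (zlin p) (MvPolynomial.pderiv i P) * zlin v i := by
  simp only [evD, ev, sum_apply]
  rfl

theorem ev_hasFDerivAt (P : MvPolynomial (Fin 4) ℂ) (p : E4) : HasFDerivAt (ev P) (evD P p) p := by
  induction P using MvPolynomial.induction_on with
  | C a =>
    have : evD (MvPolynomial.C a) p = 0 := by ext v; rw [evD_apply]; simp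
    rw [this]
    have : ev (MvPolynomial.C a) = fun _ => a := by ext; simp [ev]
    rw [this]
    exact hasFDerivAt_const _ _
  | add P Q hP hQ =>
    have : evD (P + Q) p = evD P p + evD Q p := by
      ext v
      rw [add_apply]
      simp only [evD_apply, map_add, add_mul, Finset.sum_add_distrib]
    rw [this]
    have : ev (P + Q) = fun p => ev P p + ev Q p := by ext; simp [ev]
    rw [this]
    exact hP.add hQ
  | mul_X P j hP =>
    have e1 : ev (P * MvPolynomial.X j) = fun p => ev P p * zlin p j := by ext; simp [ev]
    have h2 : HasFDerivAt (fun p => zlin p j) ((ContinuousLinearMap.proj (R := ℝ) j).comp zlin) p :=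
      ((ContinuousLinearMap.proj (R := ℝ) j).comp zlin).hasFDerivAt
    rw [e1]
    suffices e : evD (P * MvPolynomial.X j) p =
        ev P p • ((ContinuousLinearMap.proj (R := ℝ) j).comp zlin) + zlin p j • evD P p by
      rw [e]; exact hP.mul h2
    ext v
    rw [evD_apply, add_apply]
    change _ = ev P p * zlin v j + zlin p j * evD P p v
    rw [evD_apply, Finset.mul_sum]
    simp only [ev, Derivation.leibniz, MvPolynomial.pderiv_X, smul_eq_mul, map_add, map_mul,
      MvPolynomial.eval_X, add_mul, Finset.sum_add_distrib, Pi.single_apply]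
    congr 1
    · rw [Finset.sum_eq_single j]
      · simp
      · intro b _ hb; simp [Ne.symm hb]
      · simp
    · refine Finset.sum_congr rfl fun i _ => by ring

theorem ev_SM (P : MvPolynomial (Fin 4) ℂ) : SM (ev P) := by
  induction P using MvPolynomial.induction_on with
  | C a =>
    have : ev (MvPolynomial.C a) = fun _ => a := by ext; simp [ev]
    rw [this]; exact contDiff_const
  | add P Q hP hQ =>
    have : ev (P + Q) = fun p => ev P p + ev Q p := by ext; simp [ev]
    rw [this]; exact ContDiff.add hP hQ
  | mul_X P j hP =>
    have e1 : ev (P * MvPolynomial.X j) = fun p => ev P p * zlin p j := by ext; simp [ev]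
    rw [e1]
    exact ContDiff.mul hP ((ContinuousLinearMap.proj (R := ℝ) j).comp zlin).contDiff

theorem ev_hom {P : MvPolynomial (Fin 4) ℂ} {N : ℕ} (h : P.IsHomogeneous N) (t : ℝ) (p : E4) :
    ev P (t • p) = (t : ℂ) ^ N * ev P p := by
  unfold ev
  have : zlin (t • p) = (t : ℂ) • zlin p := by
    rw [map_smul]; ext i; simp
  rw [this, MvPolynomial.eval_eq', MvPolynomial.eval_eq', Finset.mul_sum]
  refine Finset.sum_congr rfl fun m hm => ?_
  have hd := h (MvPolynomial.mem_support_iff.1 hm)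
  have : ∏ i, ((t : ℂ) • zlin p) i ^ m i = (t:ℂ)^N * ∏ i, zlin p i ^ m i := by
    simp only [Pi.smul_apply, smul_eq_mul, mul_pow, Finset.prod_mul_distrib]
    rw [Finset.prod_pow_eq_pow_sum]
    congr 2
    rw [← hd, Finsupp.weight_apply, Finsupp.sum_fintype]
    · simp
    · simp
  rw [this]; ring

/-- Hamiltonian vector fields of `q1`, `q2` -/
def v1 (p : E4) : E4 := ![p 0, - p 1, p 2, - p 3]
def v2 (p : E4) : E4 := ![- p 2, - p 3, p 0, p 1]

def w1 : Fin 4 → ℂ := ![1, 1, -1, -1]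
def w2 : Fin 4 → ℂ := ![Complex.I, -Complex.I, Complex.I, -Complex.I]

theorem evD_v (w : Fin 4 → ℂ) (v p : E4) (h : ∀ i, zlin v i = w i * zlin p i)
    (P : MvPolynomial (Fin 4) ℂ) : evD P p v = ev (diagD w P) p := by
  rw [evD_apply]
  simp only [ev, diagD, map_sum, map_mul, MvPolynomial.eval_X, MvPolynomial.eval_C, h]
  refine Finset.sum_congr rfl fun i _ => ?_
  ring

theorem zlin_v1 (p : E4) (i : Fin 4) : zlin (v1 p) i = w1 i * zlin p i := by
  fin_cases i <;> simp [zlin_apply, v1, w1] <;> ring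

theorem zlin_v2 (p : E4) (i : Fin 4) : zlin (v2 p) i = w2 i * zlin p i := by
  fin_cases i <;> simp [zlin_apply, v2, w2] <;> ring_nf <;> simp <;> ring

open MvPolynomial in
theorem ev_injective {Q : MvPolynomial (Fin 4) ℂ} (h : ∀ p, ev Q p = 0) : Q = 0 := by
  let sub : Fin 4 → MvPolynomial (Fin 4) ℂ := ![X 0 + C Complex.I * X 2, X 0 - C Complex.I * X 2,
    X 1 + C Complex.I * X 3, X 1 - C Complex.I * X 3]
  have hA : bind₁ sub Q = 0 := by
    refine funext_set (fun _ => Set.range (Complex.ofReal))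
      (fun _ => Set.infinite_range_of_injective Complex.ofReal_injective) fun x hx => ?_
    have hx' : ∀ i, ∃ r : ℝ, (r : ℂ) = x i := fun i => hx i trivial
    choose r hr using hx'
    rw [map_zero, ← h r]
    unfold ev
    rw [← coe_aeval_eq_eval, ← coe_aeval_eq_eval, RingHom.coe_coe, RingHom.coe_coe, aeval_bind₁]
    congr 2
    ext i
    fin_cases i <;> simp [sub, zlin_apply, hr]
  refine MvPolynomial.funext fun z => ?_
  have := congrArg (eval ![(z 0 + z 1)/2, (z 2 + z 3)/2, -Complex.I * (z 0 - z 1)/2,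
    -Complex.I * (z 2 - z 3)/2]) hA
  rw [map_zero] at this
  rw [map_zero, ← this]
  rw [← coe_aeval_eq_eval, ← coe_aeval_eq_eval, RingHom.coe_coe, RingHom.coe_coe, aeval_bind₁]
  congr 2
  ext i
  have hI := Complex.I_mul_I
  fin_cases i <;> simp [sub] <;> ring_nf <;> simp <;> ring

open MvPolynomial in
theorem poly_of_multilinear {n : ℕ} (f : ContinuousMultilinearMap ℝ (fun _ : Fin n => E4) ℝ) :
    ∃ P : MvPolynomial (Fin 4) ℂ, P.IsHomogeneous n ∧ ∀ p, ((f (fun _ => p) : ℝ) : ℂ) = ev P p := by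
  let Lin : Fin 4 → MvPolynomial (Fin 4) ℂ := ![C (1/2) * (X 0 + X 1), C (1/2) * (X 2 + X 3),
    C (-Complex.I/2) * (X 0 - X 1), C (-Complex.I/2) * (X 2 - X 3)]
  have hLh : ∀ i, (Lin i).IsHomogeneous 1 := by
    intro i
    have hX := fun i : Fin 4 => isHomogeneous_X ℂ i
    have hC := fun a : ℂ => isHomogeneous_C (Fin 4) a
    fin_cases i
    · have := (hC (1/2)).mul ((hX 0).add (hX 1)); rw [zero_add] at this; exact this
    · have := (hC (1/2)).mul ((hX 2).add (hX 3)); rw [zero_add] at this; exact this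
    · have := (hC (-Complex.I/2)).mul ((hX 0).sub (hX 1)); rw [zero_add] at this; exact this
    · have := (hC (-Complex.I/2)).mul ((hX 2).sub (hX 3)); rw [zero_add] at this; exact this
  have hLe : ∀ i p, ev (Lin i) p = (p i : ℂ) := by
    intro i p
    fin_cases i <;> simp [Lin, ev, zlin_apply] <;> ring_nf <;> simp
  refine ⟨∑ r : Fin n → Fin 4, C ((f (fun j => Pi.single (r j) 1) : ℝ) : ℂ) * ∏ j, Lin (r j), ?_, ?_⟩
  · refine IsHomogeneous.sum _ _ _ fun r _ => ?_
    have := (isHomogeneous_C (Fin 4) ((f (fun j => Pi.single (r j) 1) : ℝ) : ℂ)).mul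
      (IsHomogeneous.prod Finset.univ (fun j => Lin (r j)) (fun _ => 1) fun j _ => hLh (r j))
    simpa using this
  · intro p
    have hp : p = ∑ i, p i • (Pi.single i 1 : E4) := by
      ext j; simp [Pi.single_apply]
    have h1 : f (fun _ => p) = ∑ r : Fin n → Fin 4, (∏ j, p (r j)) * f (fun j => Pi.single (r j) 1) := by
      conv_lhs => rw [hp]
      rw [f.map_sum]
      refine Finset.sum_congr rfl fun r _ => ?_
      rw [f.map_smul_univ (fun j => p (r j)) (fun j => (Pi.single (r j) 1 : E4)), smul_eq_mul]
    rw [h1]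
    unfold ev at hLe ⊢
    simp [hLe, mul_comm]


open MvPolynomial in
theorem exists_coeffs (T : Finset (Fin 4 →₀ ℕ)) (c : (Fin 4 →₀ ℕ) → ℂ) (hc : ∀ m, m ∉ T → c m = 0) :
    ∃ S : MvPolynomial (Fin 4) ℂ, ∀ m, coeff m S = c m := by
  classical
  refine ⟨∑ m ∈ T, monomial m (c m), fun m => ?_⟩
  simp only [coeff_sum, coeff_monomial, Finset.sum_ite_eq']
  split_ifs with h
  · rfl
  · exact (hc m h).symm

theorem wt_zero {m : Fin 4 →₀ ℕ} (h1 : wt w1 m = 0) (h2 : wt w2 m = 0) : m 3 = m 0 ∧ m 2 = m 1 := by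
  simp only [wt, w1, w2, Fin.sum_univ_four] at h1 h2
  have a := congrArg Complex.re h1
  have b := congrArg Complex.im h2
  simp at a b
  constructor
  · have : (m 3 : ℝ) = m 0 := by linarith
    exact_mod_cast this
  · have : (m 2 : ℝ) = m 1 := by linarith
    exact_mod_cast this

open MvPolynomial in
theorem resonant_factor {K : MvPolynomial (Fin 4) ℂ} {N : ℕ} (hK : K.IsHomogeneous N)
    (hw : ∀ m ∈ K.support, m 3 = m 0 ∧ m 2 = m 1) :
    ∃ g : E2 → ℝ, SM g ∧ (∀ (t : ℝ) y, g (t • y) = t ^ (N / 2) • g y) ∧ (¬ Even N → g = 0) ∧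
      ∀ p, (ev K p).re = g (qmap p) := by
  have hdeg : ∀ m ∈ K.support, N = 2 * (m 0 + m 1) := by
    intro m hm
    have hd := hK (mem_support_iff.1 hm)
    rw [Finsupp.weight_apply, Finsupp.sum_fintype] at hd
    · simp [Fin.sum_univ_four] at hd
      have := hw m hm
      omega
    · simp
  refine ⟨fun y => (∑ m ∈ K.support, coeff m K * (((y 0 : ℂ) - Complex.I * y 1) ^ m 0 *
    ((y 0 : ℂ) + Complex.I * y 1) ^ m 1)).re, ?_, ?_, ?_, ?_⟩
  · have h0 : ∀ i : Fin 2, ContDiff ℝ (⊤:ℕ∞) (fun y : E2 => (y i : ℂ)) := fun i =>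
      Complex.ofRealCLM.contDiff.comp (contDiff_apply ℝ ℝ i)
    refine Complex.reCLM.contDiff.comp (ContDiff.sum fun m _ => contDiff_const.mul
      (ContDiff.mul (ContDiff.pow ((h0 0).sub (contDiff_const.mul (h0 1))) _)
        (ContDiff.pow ((h0 0).add (contDiff_const.mul (h0 1))) _)))
  · intro t y
    have : ∀ m ∈ K.support, coeff m K * ((((t • y) 0 : ℝ) - Complex.I * ((t • y) 1 : ℝ)) ^ m 0 *
        ((((t • y) 0 : ℝ) : ℂ) + Complex.I * ((t • y) 1 : ℝ)) ^ m 1) =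
        ((t ^ (N/2) : ℝ) : ℂ) * (coeff m K * (((y 0 : ℂ) - Complex.I * y 1) ^ m 0 *
        ((y 0 : ℂ) + Complex.I * y 1) ^ m 1)) := by
      intro m hm
      have hN : N / 2 = m 0 + m 1 := by have := hdeg m hm; omega
      have e1 : (((t • y) 0 : ℝ) : ℂ) - Complex.I * ((t • y) 1 : ℝ) = t * ((y 0 : ℂ) - Complex.I * y 1) := by
        simp; ring
      have e2 : (((t • y) 0 : ℝ) : ℂ) + Complex.I * ((t • y) 1 : ℝ) = t * ((y 0 : ℂ) + Complex.I * y 1) := by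
        simp; ring
      rw [e1, e2, hN, mul_pow, mul_pow]
      push_cast
      ring
    dsimp only
    rw [Finset.sum_congr rfl this, ← Finset.mul_sum, Complex.re_ofReal_mul, smul_eq_mul]
  · intro hN
    have : K.support = ∅ := by
      rw [Finset.eq_empty_iff_forall_notMem]
      intro m hm
      exact hN ⟨m 0 + m 1, by have := hdeg m hm; omega⟩
    ext y
    simp [this]
  · intro p
    dsimp only
    unfold ev
    rw [eval_eq']
    congr 1
    refine Finset.sum_congr rfl fun m hm => ?_
    obtain ⟨e3, e2⟩ := hw m hm
    rw [Fin.prod_univ_four, e3, e2]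
    have a1 : ((qmap p 0 : ℝ) : ℂ) - Complex.I * (qmap p 1 : ℝ) = zlin p 0 * zlin p 3 := by
      simp [qmap, q1, q2, zlin_apply]; ring_nf; simp
    have a2 : ((qmap p 0 : ℝ) : ℂ) + Complex.I * (qmap p 1 : ℝ) = zlin p 1 * zlin p 2 := by
      simp [qmap, q1, q2, zlin_apply]; ring_nf; simp
    rw [a1, a2, mul_pow, mul_pow]
    ring

open MvPolynomial in
theorem poly_split {N : ℕ} {P1 P2 : MvPolynomial (Fin 4) ℂ} (h1 : P1.IsHomogeneous N)
    (h2 : P2.IsHomogeneous N) (hc : diagD w1 P2 = diagD w2 P1) :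
    ∃ S K1 K2 : MvPolynomial (Fin 4) ℂ, S.IsHomogeneous N ∧ K1.IsHomogeneous N ∧ K2.IsHomogeneous N ∧
      (∀ m ∈ K1.support, m 3 = m 0 ∧ m 2 = m 1) ∧ (∀ m ∈ K2.support, m 3 = m 0 ∧ m 2 = m 1) ∧
      P1 = K1 + diagD w1 S ∧ P2 = K2 + diagD w2 S := by
  classical
  have hcc : ∀ m, wt w1 m * coeff m P2 = wt w2 m * coeff m P1 := fun m => by
    rw [← coeff_diagD, ← coeff_diagD, hc]
  let c : (Fin 4 →₀ ℕ) → ℂ := fun m => if wt w1 m ≠ 0 then coeff m P1 / wt w1 m else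
    if wt w2 m ≠ 0 then coeff m P2 / wt w2 m else 0
  let k : MvPolynomial (Fin 4) ℂ → (Fin 4 →₀ ℕ) → ℂ := fun P m =>
    if wt w1 m = 0 ∧ wt w2 m = 0 then coeff m P else 0
  obtain ⟨S, hS⟩ := exists_coeffs (P1.support ∪ P2.support) c (by
    intro m hm
    rw [Finset.mem_union, not_or, notMem_support_iff, notMem_support_iff] at hm
    simp [c, hm.1, hm.2])
  have hk : ∀ P : MvPolynomial (Fin 4) ℂ, ∃ K : MvPolynomial (Fin 4) ℂ, ∀ m, coeff m K = k P m := by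
    intro P
    refine exists_coeffs P.support _ fun m hm => ?_
    rw [notMem_support_iff] at hm
    simp [k, hm]
  obtain ⟨K1, hK1⟩ := hk P1
  obtain ⟨K2, hK2⟩ := hk P2
  refine ⟨S, K1, K2, ?_, ?_, ?_, ?_, ?_, ?_, ?_⟩
  · intro m hm
    rw [hS] at hm
    by_cases e : coeff m P1 = 0
    · by_cases e2 : coeff m P2 = 0
      · simp [c, e, e2] at hm
      · exact h2 e2
    · exact h1 e
  · intro m hm
    rw [hK1] at hm
    refine h1 (d := m) fun e => hm ?_
    simp [k, e]
  · intro m hm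
    rw [hK2] at hm
    refine h2 (d := m) fun e => hm ?_
    simp [k, e]
  · intro m hm
    rw [mem_support_iff, hK1] at hm
    by_cases e : wt w1 m = 0 ∧ wt w2 m = 0
    · exact wt_zero e.1 e.2
    · simp [k, e] at hm
  · intro m hm
    rw [mem_support_iff, hK2] at hm
    by_cases e : wt w1 m = 0 ∧ wt w2 m = 0
    · exact wt_zero e.1 e.2
    · simp [k, e] at hm
  · ext m
    rw [coeff_add, coeff_diagD, hK1, hS]
    by_cases a : wt w1 m = 0
    · by_cases b : wt w2 m = 0
      · simp [k, a, b]
      · have := hcc m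
        rw [a, zero_mul] at this
        have : coeff m P1 = 0 := by
          rcases mul_eq_zero.1 this.symm with h | h
          · exact absurd h b
          · exact h
        simp [k, a, b, this]
    · simp only [k, c, a]
      simp [a]
      field_simp
  · ext m
    rw [coeff_add, coeff_diagD, hK2, hS]
    by_cases a : wt w1 m = 0
    · by_cases b : wt w2 m = 0
      · simp [k, a, b]
      · simp only [k, c, a, b]
        simp [b]
        field_simp
    · simp only [k, c, a]
      simp [a]
      have := hcc m
      field_simp
      linear_combination this

theorem ev_add (P Q : MvPolynomial (Fin 4) ℂ) (p : E4) : ev (P + Q) p = ev P p + ev Q p := by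
  simp [ev]

/-- Homological equation. -/
theorem homological {N : ℕ} {r1 r2 : E4 → ℝ} {P1 P2 : MvPolynomial (Fin 4) ℂ}
    (h1 : P1.IsHomogeneous N) (h2 : P2.IsHomogeneous N)
    (e1 : ∀ p, (r1 p : ℂ) = ev P1 p) (e2 : ∀ p, (r2 p : ℂ) = ev P2 p)
    (hc : ∀ p, fderiv ℝ r2 p (v1 p) = fderiv ℝ r1 p (v2 p)) :
    ∃ (s : E4 → ℝ) (g1 g2 : E2 → ℝ), SM s ∧ SM g1 ∧ SM g2 ∧
      (∀ (t : ℝ) p, s (t • p) = t ^ N • s p) ∧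
      (∀ (t : ℝ) y, g1 (t • y) = t ^ (N / 2) • g1 y) ∧
      (∀ (t : ℝ) y, g2 (t • y) = t ^ (N / 2) • g2 y) ∧
      (¬ Even N → g1 = 0) ∧ (¬ Even N → g2 = 0) ∧
      (∀ p, r1 p = g1 (qmap p) + fderiv ℝ s p (v1 p)) ∧
      (∀ p, r2 p = g2 (qmap p) + fderiv ℝ s p (v2 p)) := by
  have hre : ∀ (P : MvPolynomial (Fin 4) ℂ) p v,
      fderiv ℝ (fun p => (ev P p).re) p v = (evD P p v).re := by
    intro P p v
    have : HasFDerivAt (fun p => (ev P p).re) (Complex.reCLM.comp (evD P p)) p :=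
      Complex.reCLM.hasFDerivAt.comp p (ev_hasFDerivAt P p)
    rw [this.fderiv]; rfl
  have hof : ∀ (r : E4 → ℝ) (P : MvPolynomial (Fin 4) ℂ), (∀ p, (r p : ℂ) = ev P p) →
      ∀ p v, ((fderiv ℝ r p v : ℝ) : ℂ) = evD P p v := by
    intro r P h p v
    have hr : r = fun p => (ev P p).re := by ext p; rw [← h p, Complex.ofReal_re]
    have hd : DifferentiableAt ℝ r p := by
      rw [hr]; exact (Complex.reCLM.hasFDerivAt.comp p (ev_hasFDerivAt P p)).differentiableAt
    have h3 : HasFDerivAt (fun p => (r p : ℂ)) (Complex.ofRealCLM.comp (fderiv ℝ r p)) p :=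
      Complex.ofRealCLM.hasFDerivAt.comp p hd.hasFDerivAt
    have h4 : (fun p => (r p : ℂ)) = ev P := by ext p; exact h p
    rw [h4] at h3
    rw [← (h3.unique (ev_hasFDerivAt P p))]
    rfl
  have hcomm : diagD w1 P2 = diagD w2 P1 := by
    rw [← sub_eq_zero]
    refine ev_injective fun p => ?_
    have := congrArg (fun x : ℝ => (x : ℂ)) (hc p)
    rw [hof r2 P2 e2, hof r1 P1 e1, evD_v w1 _ p (zlin_v1 p), evD_v w2 _ p (zlin_v2 p)] at this
    unfold ev at this ⊢
    rw [map_sub, this, sub_self]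
  obtain ⟨S, K1, K2, hS, hK1, hK2, hk1, hk2, s1, s2⟩ := poly_split h1 h2 hcomm
  obtain ⟨g1, hg1, gh1, go1, ge1⟩ := resonant_factor hK1 hk1
  obtain ⟨g2, hg2, gh2, go2, ge2⟩ := resonant_factor hK2 hk2
  refine ⟨fun p => (ev S p).re, g1, g2, Complex.reCLM.contDiff.comp (ev_SM S), hg1, hg2, ?_,
    gh1, gh2, go1, go2, ?_, ?_⟩
  · intro t p
    dsimp only
    rw [ev_hom hS, ← Complex.ofReal_pow, Complex.re_ofReal_mul, smul_eq_mul]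
  · intro p
    rw [hre, evD_v w1 _ p (zlin_v1 p), ← ge1, ← Complex.add_re, ← ev_add, ← s1, ← e1, Complex.ofReal_re]
  · intro p
    rw [hre, evD_v w2 _ p (zlin_v2 p), ← ge2, ← Complex.add_re, ← ev_add, ← s2, ← e2, Complex.ofReal_re]


/-- bracket of covectors -/
def br (a b : E4 →L[ℝ] ℝ) : ℝ :=
  a (Pi.single 1 1) * b (Pi.single 0 1) - a (Pi.single 0 1) * b (Pi.single 1 1)
   + a (Pi.single 3 1) * b (Pi.single 2 1) - a (Pi.single 2 1) * b (Pi.single 3 1)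

theorem pois_eq_br (f g : E4 → ℝ) (p : E4) : pois f g p = br (fderiv ℝ f p) (fderiv ℝ g p) := rfl

theorem clm_expand (a : E4 →L[ℝ] ℝ) (v : E4) : a v = v 0 * a (Pi.single 0 1) + v 1 * a (Pi.single 1 1)
    + v 2 * a (Pi.single 2 1) + v 3 * a (Pi.single 3 1) := by
  have hv : v = ∑ i, v i • (Pi.single i 1 : E4) := by
    ext j; simp [Pi.single_apply]
  conv_lhs => rw [hv]
  simp [map_sum, Fin.sum_univ_four]

theorem br_of_omega {a b : E4 →L[ℝ] ℝ} {X Y : E4} (ha : ∀ v, a v = omega0 X v) (hb : ∀ v, b v = omega0 Y v) :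
    br a b = omega0 X Y := by
  simp only [br, ha, hb, omega0]
  simp [Pi.single_apply]
  ring

theorem exists_omega (a : E4 →L[ℝ] ℝ) : ∃ X, ∀ v, a v = omega0 X v := by
  refine ⟨![- a (Pi.single 1 1), a (Pi.single 0 1), - a (Pi.single 3 1), a (Pi.single 2 1)], fun v => ?_⟩
  rw [clm_expand]
  simp [omega0]
  ring

theorem br_comp {A : E4 →L[ℝ] E4} (hA : ∀ u v, omega0 (A u) (A v) = omega0 u v) (a b : E4 →L[ℝ] ℝ) :
    br (a.comp A) (b.comp A) = br a b := by
  have hinj : Function.Injective (A : E4 →ₗ[ℝ] E4) := by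
    rw [injective_iff_map_eq_zero]
    intro u hu
    have hu' : A u = 0 := hu
    have h : ∀ v, omega0 u v = 0 := fun v => by rw [← hA, hu']; simp [omega0]
    have h0 := h (Pi.single 0 1)
    have h1 := h (Pi.single 1 1)
    have h2 := h (Pi.single 2 1)
    have h3 := h (Pi.single 3 1)
    simp [omega0, Pi.single_apply] at h0 h1 h2 h3
    ext i; fin_cases i <;> simp [*]
  have hsurj : Function.Surjective A := LinearMap.injective_iff_surjective.1 hinj
  obtain ⟨X, hX⟩ := exists_omega a
  obtain ⟨Y, hY⟩ := exists_omega b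
  obtain ⟨X', rfl⟩ := hsurj X
  obtain ⟨Y', rfl⟩ := hsurj Y
  rw [br_of_omega hX hY, hA]
  refine br_of_omega (fun v => ?_) (fun v => ?_)
  · simp [hX, hA]
  · simp [hY, hA]

theorem pois_comp {f g : E4 → ℝ} {χ : E4 → E4} {p : E4} (hf : DifferentiableAt ℝ f (χ p))
    (hg : DifferentiableAt ℝ g (χ p)) (hχ : DifferentiableAt ℝ χ p)
    (hA : ∀ u v, omega0 (fderiv ℝ χ p u) (fderiv ℝ χ p v) = omega0 u v) :
    pois (fun x => f (χ x)) (fun x => g (χ x)) p = pois f g (χ p) := by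
  rw [pois_eq_br, pois_eq_br, ← br_comp hA (fderiv ℝ f (χ p))]
  congr 1
  · exact (fderiv_comp p hf hχ)
  · exact (fderiv_comp p hg hχ)

theorem SM.pd {f : E4 → ℝ} (hf : SM f) (i : Fin 4) : SM (pd i f) := by
  have := SM.fderiv hf
  exact ContDiff.clm_apply this contDiff_const

theorem OO.pd {f : E4 → ℝ} {N : ℕ} (h : OO (N+1) f) (hf : SM f) (i : Fin 4) : OO N (pd i f) := by
  have h1 := OO.fderiv h hf
  refine IsBigO.trans ?_ h1
  refine IsBigO.of_bound ‖(Pi.single i 1 : E4)‖ (Eventually.of_forall fun x => ?_)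
  rw [mul_comm]
  exact ContinuousLinearMap.le_opNorm _ _

theorem OO.pois {f g : E4 → ℝ} {M N : ℕ} (h : OO (M+1) f) (hf : SM f) (h' : OO (N+1) g) (hg : SM g) :
    OO (M+N) (pois f g) :=
  ((((h.pd hf 1).mul (h'.pd hg 0)).sub ((h.pd hf 0).mul (h'.pd hg 1))).add
    ((h.pd hf 3).mul (h'.pd hg 2))).sub ((h.pd hf 2).mul (h'.pd hg 3))

theorem pd_add {f g : E4 → ℝ} (hf : SM f) (hg : SM g) (i : Fin 4) (p : E4) :
    pd i (fun x => f x + g x) p = pd i f p + pd i g p := by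
  unfold pd
  rw [fderiv_fun_add (hf.diff p) (hg.diff p)]; rfl

theorem pd_sub {f g : E4 → ℝ} (hf : SM f) (hg : SM g) (i : Fin 4) (p : E4) :
    pd i (fun x => f x - g x) p = pd i f p - pd i g p := by
  unfold pd
  rw [fderiv_fun_sub (hf.diff p) (hg.diff p)]; rfl

theorem q1_SM : SM q1 := by
  have h := fun i : Fin 4 => contDiff_apply (n := (⊤:ℕ∞)) ℝ ℝ i
  exact ((h 0).mul (h 1)).add ((h 2).mul (h 3))

theorem q2_SM : SM q2 := by
  have h := fun i : Fin 4 => contDiff_apply (n := (⊤:ℕ∞)) ℝ ℝ i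
  exact ((h 0).mul (h 3)).sub ((h 2).mul (h 1))

theorem qmap_SM : SM qmap := by
  refine contDiff_pi.2 fun i => ?_
  fin_cases i
  · exact q1_SM
  · exact q2_SM

theorem qmap_hom (t : ℝ) (p : E4) : qmap (t • p) = t^2 • qmap p := by
  ext i; fin_cases i <;> simp [qmap, q1, q2] <;> ring

theorem qmap_OO : OO 2 qmap := OO_of_hom (ContDiff.continuous qmap_SM) qmap_hom

theorem q1_OO : OO 2 q1 := OO_of_hom (ContDiff.continuous q1_SM) fun t p => congrFun (qmap_hom t p) 0
theorem q2_OO : OO 2 q2 := OO_of_hom (ContDiff.continuous q2_SM) fun t p => congrFun (qmap_hom t p) 1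

theorem q1_deriv (p v : E4) : fderiv ℝ q1 p v = v 0 * p 1 + p 0 * v 1 + v 2 * p 3 + p 2 * v 3 := by
  have h := fun i : Fin 4 => (ContinuousLinearMap.proj (R := ℝ) (φ := fun _ : Fin 4 => ℝ) i).hasFDerivAt (x := p)
  have := ((h 0).mul (h 1)).add ((h 2).mul (h 3))
  have e : fderiv ℝ q1 p = _ := this.fderiv
  rw [e]
  simp
  ring

theorem q2_deriv (p v : E4) : fderiv ℝ q2 p v = v 0 * p 3 + p 0 * v 3 - v 2 * p 1 - p 2 * v 1 := by
  have h := fun i : Fin 4 => (ContinuousLinearMap.proj (R := ℝ) (φ := fun _ : Fin 4 => ℝ) i).hasFDerivAt (x := p)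
  have := ((h 0).mul (h 3)).sub ((h 2).mul (h 1))
  have e : fderiv ℝ q2 p = _ := this.fderiv
  rw [e]
  simp
  ring

theorem pois_q1 (r : E4 → ℝ) (p : E4) : pois q1 r p = fderiv ℝ r p (v1 p) := by
  rw [clm_expand (fderiv ℝ r p)]
  simp only [pois, pd, q1_deriv, v1]
  simp [Pi.single_apply]
  ring

theorem pois_q2 (r : E4 → ℝ) (p : E4) : pois q2 r p = fderiv ℝ r p (v2 p) := by
  rw [clm_expand (fderiv ℝ r p)]
  simp only [pois, pd, q2_deriv, v2]
  simp [Pi.single_apply]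
  ring

theorem pois_q1q2 (p : E4) : pois q1 q2 p = 0 := by
  rw [pois_q1, q2_deriv]; simp [v1]

theorem pois_Gq {G1 G2 : E2 → ℝ} (h1 : SM G1) (h2 : SM G2) (p : E4) :
    pois (fun x => G1 (qmap x)) (fun x => G2 (qmap x)) p = 0 := by
  have hq : HasFDerivAt qmap (fderiv ℝ qmap p) p := (qmap_SM.diff p).hasFDerivAt
  have hd : ∀ (G : E2 → ℝ), SM G → ∀ i, pd i (fun x => G (qmap x)) p =
      fderiv ℝ G (qmap p) (Pi.single 0 1) * pd i q1 p + fderiv ℝ G (qmap p) (Pi.single 1 1) * pd i q2 p := by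
    intro G hG i
    have e : fderiv ℝ (fun x => G (qmap x)) p = (fderiv ℝ G (qmap p)).comp (fderiv ℝ qmap p) :=
      fderiv_comp p (hG.diff _) (qmap_SM.diff p)
    have h0 : HasFDerivAt q1 ((ContinuousLinearMap.proj (R := ℝ) (φ := fun _ : Fin 2 => ℝ) 0).comp (fderiv ℝ qmap p)) p :=
      (hasFDerivAt_pi'.1 hq) 0
    have h1 : HasFDerivAt q2 ((ContinuousLinearMap.proj (R := ℝ) (φ := fun _ : Fin 2 => ℝ) 1).comp (fderiv ℝ qmap p)) p :=
      (hasFDerivAt_pi'.1 hq) 1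
    unfold pd
    rw [e, h0.fderiv, h1.fderiv]
    simp only [ContinuousLinearMap.comp_apply, ContinuousLinearMap.proj_apply]
    set w := fderiv ℝ qmap p (Pi.single i 1)
    have hw : w = ∑ i, w i • (Pi.single i 1 : E2) := by
      ext j; simp [Pi.single_apply]
    conv_lhs => rw [hw]
    simp [map_sum, Fin.sum_univ_two]
    ring
  have := pois_q1q2 p
  unfold pois at this ⊢
  simp only [hd G1 h1, hd G2 h2]
  linear_combination (fderiv ℝ G1 (qmap p) (Pi.single 0 1) * fderiv ℝ G2 (qmap p) (Pi.single 1 1) -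
    fderiv ℝ G1 (qmap p) (Pi.single 1 1) * fderiv ℝ G2 (qmap p) (Pi.single 0 1)) * this

theorem hom_deriv {r : E4 → ℝ} {N : ℕ} (hr : SM r) (h : ∀ (t : ℝ) p, r (t • p) = t ^ N • r p)
    (v : E4 → E4) (hv : ∀ (t : ℝ) p, v (t • p) = t • v p) (t : ℝ) (p : E4) :
    fderiv ℝ r (t • p) (v (t • p)) = t ^ N • fderiv ℝ r p (v p) := by
  have e : (fun x => r (t • x)) = fun x => t ^ N • r x := by ext x; exact h t x
  have h1 : HasFDerivAt (fun x => r (t • x)) ((fderiv ℝ r (t • p)).comp (t • ContinuousLinearMap.id ℝ E4)) p := by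
    have h2 : HasFDerivAt (fun x : E4 => t • x) (t • ContinuousLinearMap.id ℝ E4) p :=
      (t • ContinuousLinearMap.id ℝ E4).hasFDerivAt
    exact (hr.diff (t • p)).hasFDerivAt.comp p h2
  have h3 : HasFDerivAt (fun x => t ^ N • r x) (t ^ N • fderiv ℝ r p) p :=
    (hr.diff p).hasFDerivAt.const_smul (t ^ N)
  rw [e] at h1
  have := congrArg (fun L : E4 →L[ℝ] ℝ => L (v p)) (h1.unique h3)
  rw [hv]
  simpa using this

theorem compat {N : ℕ} (hN : 3 ≤ N) {r1 r2 F1 F2 H1 H2 : E4 → ℝ} (hr1 : SM r1) (hr2 : SM r2)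
    (rh1 : ∀ (t : ℝ) p, r1 (t • p) = t ^ N • r1 p) (rh2 : ∀ (t : ℝ) p, r2 (t • p) = t ^ N • r2 p)
    (hF1 : SM F1) (hF2 : SM F2) (hH1 : SM H1) (hH2 : SM H2) (hH : ∀ p, pois H1 H2 p = 0)
    (k1 : OO 3 (fun p => H1 p - q1 p)) (k2 : OO 3 (fun p => H2 p - q2 p))
    (e1 : OO (N+1) (fun p => F1 p - H1 p - r1 p)) (e2 : OO (N+1) (fun p => F2 p - H2 p - r2 p))
    (hF : ∀ᶠ p in 𝓝 0, pois F1 F2 p = 0) (p : E4) :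
    fderiv ℝ r2 p (v1 p) = fderiv ℝ r1 p (v2 p) := by
  have ev1 : ∀ (t : ℝ) p, v1 (t • p) = t • v1 p := by
    intro t p; ext i; fin_cases i <;> simp [v1]
  have ev2 : ∀ (t : ℝ) p, v2 (t • p) = t • v2 p := by
    intro t p; ext i; fin_cases i <;> simp [v2]
  obtain ⟨n, rfl⟩ : ∃ n, N = n + 1 := ⟨N - 1, by omega⟩
  have or1 : OO (n+1) r1 := OO_of_hom (ContDiff.continuous hr1) rh1
  have or2 : OO (n+1) r2 := OO_of_hom (ContDiff.continuous hr2) rh2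
  have sk1 : SM (fun p => H1 p - q1 p) := ContDiff.sub hH1 q1_SM
  have sk2 : SM (fun p => H2 p - q2 p) := ContDiff.sub hH2 q2_SM
  have se1 : SM (fun p => F1 p - H1 p - r1 p) := ContDiff.sub (ContDiff.sub hF1 hH1) hr1
  have se2 : SM (fun p => F2 p - H2 p - r2 p) := ContDiff.sub (ContDiff.sub hF2 hH2) hr2
  have sρ1 : SM (fun p => F1 p - H1 p) := ContDiff.sub hF1 hH1
  have sρ2 : SM (fun p => F2 p - H2 p) := ContDiff.sub hF2 hH2
  have oρ1 : OO (n+1) (fun p => F1 p - H1 p) :=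
    ((e1.mono (Nat.le_succ _)).add or1).congr' (Eventually.of_forall fun p => by ring)
  have oρ2 : OO (n+1) (fun p => F2 p - H2 p) :=
    ((e2.mono (Nat.le_succ _)).add or2).congr' (Eventually.of_forall fun p => by ring)
  have t1 := (OO.pois k1 sk1 oρ2 sρ2).mono (show n + 1 + 1 ≤ 2 + n by omega)
  have t2 := (OO.pois q1_OO q1_SM e2 se2).mono (show n + 1 + 1 ≤ 1 + (n+1) by omega)
  have t3 := (OO.pois oρ1 sρ1 k2 sk2).mono (show n + 1 + 1 ≤ n + 2 by omega)
  have t4 := (OO.pois e1 se1 q2_OO q2_SM).mono (show n + 1 + 1 ≤ n + 1 + 1 by omega)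
  have t5 := (OO.pois oρ1 sρ1 oρ2 sρ2).mono (show n + 1 + 1 ≤ n + n by omega)
  have hOO : OO (n+1+1) (fun p => fderiv ℝ r2 p (v1 p) - fderiv ℝ r1 p (v2 p)) := by
    refine (((((t1.add t2).add t3).add t4).add t5).neg).congr' ?_
    filter_upwards [hF] with p hp
    have hHp := hH p
    rw [← pois_q1, ← pois_q2]
    simp only [pois, pd_sub (ContDiff.sub hF1 hH1) hr1, pd_sub (ContDiff.sub hF2 hH2) hr2,
      pd_sub hF1 hH1, pd_sub hF2 hH2, pd_sub hH1 q1_SM, pd_sub hH2 q2_SM] at hp hHp ⊢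
    linear_combination hHp - hp
  have := hom_zero_of_OO (fun t x => ?_) hOO p
  · linarith
  · rw [hom_deriv hr2 rh2 v1 ev1, hom_deriv hr1 rh1 v2 ev2, smul_sub]


/-- old coordinates -/
def al (σ : E4 → ℝ) (p : E4) : E4 := ![p 0, p 1 + pd 0 σ p, p 2, p 3 + pd 2 σ p]
/-- new coordinates -/
def be (σ : E4 → ℝ) (p : E4) : E4 := ![p 0 + pd 1 σ p, p 1, p 2 + pd 3 σ p, p 3]

theorem al_SM {σ : E4 → ℝ} (h : SM σ) : SM (al σ) := by
  have c := fun i : Fin 4 => contDiff_apply (n := (⊤:ℕ∞)) ℝ ℝ i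
  refine contDiff_pi.2 fun i => ?_
  fin_cases i
  · exact c 0
  · exact (c 1).add (h.pd 0)
  · exact c 2
  · exact (c 3).add (h.pd 2)

theorem be_SM {σ : E4 → ℝ} (h : SM σ) : SM (be σ) := by
  have c := fun i : Fin 4 => contDiff_apply (n := (⊤:ℕ∞)) ℝ ℝ i
  refine contDiff_pi.2 fun i => ?_
  fin_cases i
  · exact (c 0).add (h.pd 1)
  · exact c 1
  · exact (c 2).add (h.pd 3)
  · exact c 3

theorem OO_pi {E : Type} [NormedAddCommGroup E] {n : ℕ} {g : E → Fin n → ℝ} {N : ℕ}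
    (h : ∀ i, OO N (fun x => g x i)) : OO N g := isBigO_pi.2 h

theorem OO_const_zero {E F : Type} [NormedAddCommGroup E] [NormedAddCommGroup F] (N : ℕ) :
    OO N (fun _ : E => (0:F)) := isBigO_zero _ _

theorem al_diff {σ σ' : E4 → ℝ} (h : SM σ) (h' : SM σ') {N : ℕ} (ho : OO (N+1) (fun x => σ x - σ' x)) :
    OO N (fun p => al σ p - al σ' p) := by
  have hd := fun i => (OO.pd ho (ContDiff.sub h h') i).congr'
    (Eventually.of_forall fun p => pd_sub h h' i p)
  refine OO_pi fun i => ?_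
  fin_cases i
  · exact (OO_const_zero N).congr' (Eventually.of_forall fun p => by simp [al])
  · exact (hd 0).congr' (Eventually.of_forall fun p => by simp [al])
  · exact (OO_const_zero N).congr' (Eventually.of_forall fun p => by simp [al])
  · exact (hd 2).congr' (Eventually.of_forall fun p => by simp [al])

theorem be_diff {σ σ' : E4 → ℝ} (h : SM σ) (h' : SM σ') {N : ℕ} (ho : OO (N+1) (fun x => σ x - σ' x)) :
    OO N (fun p => be σ p - be σ' p) := by
  have hd := fun i => (OO.pd ho (ContDiff.sub h h') i).congr'
    (Eventually.of_forall fun p => pd_sub h h' i p)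
  refine OO_pi fun i => ?_
  fin_cases i
  · exact (hd 1).congr' (Eventually.of_forall fun p => by simp [be])
  · exact (OO_const_zero N).congr' (Eventually.of_forall fun p => by simp [be])
  · exact (hd 3).congr' (Eventually.of_forall fun p => by simp [be])
  · exact (OO_const_zero N).congr' (Eventually.of_forall fun p => by simp [be])

theorem pd_zero (i : Fin 4) (p : E4) : pd i (fun _ => 0) p = 0 := by simp [pd]

theorem al_zero (p : E4) : al (fun _ => 0) p = p := by
  ext i; fin_cases i <;> simp [al, pd_zero]

theorem be_zero (p : E4) : be (fun _ => 0) p = p := by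
  ext i; fin_cases i <;> simp [be, pd_zero]

theorem al_id {σ : E4 → ℝ} (h : SM σ) (ho : OO 3 σ) : OO 2 (fun p => al σ p - p) := by
  have := al_diff h (σ' := fun _ => 0) contDiff_const (N := 2)
    (ho.congr' (Eventually.of_forall fun p => by simp))
  simpa only [al_zero] using this

theorem be_id {σ : E4 → ℝ} (h : SM σ) (ho : OO 3 σ) : OO 2 (fun p => be σ p - p) := by
  have := be_diff h (σ' := fun _ => 0) contDiff_const (N := 2)
    (ho.congr' (Eventually.of_forall fun p => by simp))
  simpa only [be_zero] using this

theorem globalise {E F : Type} [NormedAddCommGroup E] [NormedSpace ℝ E] [FiniteDimensional ℝ E]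
    [NormedAddCommGroup F] [NormedSpace ℝ F] {f : E → F} {u : Set E} (hu : u ∈ 𝓝 (0:E))
    (hf : ContDiffOn ℝ (⊤:ℕ∞) f u) : ∃ g : E → F, SM g ∧ ∀ᶠ p in 𝓝 0, g p = f p := by
  obtain ⟨δ, hδ, hb⟩ := Metric.mem_nhds_iff.1 hu
  let φ : ContDiffBump (0:E) := ⟨δ/4, δ/2, by positivity, by linarith⟩
  refine ⟨fun x => φ x • f x, ?_, ?_⟩
  · refine contDiff_iff_contDiffAt.2 fun x => ?_
    by_cases hx : x ∈ Metric.ball (0:E) δ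
    · exact φ.contDiffAt.smul (hf.contDiffAt (mem_of_superset (Metric.isOpen_ball.mem_nhds hx) hb))
    · have : (fun x => φ x • f x) =ᶠ[𝓝 x] fun _ => 0 := by
        have h1 : x ∉ tsupport φ := by
          rw [φ.tsupport_eq]
          intro hx'
          refine hx (Metric.closedBall_subset_ball ?_ hx')
          change δ/2 < δ
          linarith
        filter_upwards [(isClosed_tsupport φ).isOpen_compl.mem_nhds h1] with y hy
        rw [image_eq_zero_of_notMem_tsupport hy, zero_smul]
      exact contDiffAt_const.congr_of_eventuallyEq this
  · filter_upwards [φ.eventuallyEq_one] with x hx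
    rw [hx]; simp

section tang
variable {E : Type} [NormedAddCommGroup E] [NormedSpace ℝ E]

theorem OO1_of_id {A : E → E} (h : OO 2 (fun p => A p - p)) : OO 1 A :=
  ((h.mono one_le_two).add OO_id).congr' (Eventually.of_forall fun p => by simp)

theorem fderiv_of_id [CompleteSpace E] {A : E → E} (hA : SM A) (h : OO 2 (fun p => A p - p)) :
    fderiv ℝ A 0 = ContinuousLinearMap.id ℝ E := by
  have h1 := (OO.fderiv h (ContDiff.sub hA contDiff_id)).zero_at
  rw [fderiv_fun_sub (hA.diff 0) differentiableAt_fun_id, fderiv_fun_id, sub_eq_zero] at h1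
  exact h1

/-- smooth local inverse -/
theorem exists_inv [FiniteDimensional ℝ E] [CompleteSpace E] {A : E → E} (hA : SM A)
    (h : OO 2 (fun p => A p - p)) :
    ∃ τ : E → E, SM τ ∧ OO 2 (fun p => τ p - p) ∧ ∀ᶠ p in 𝓝 0, A (τ p) = p := by
  have hd : HasFDerivAt A ((ContinuousLinearEquiv.refl ℝ E : E ≃L[ℝ] E) : E →L[ℝ] E) 0 := by
    have := (hA.diff 0).hasFDerivAt
    rw [fderiv_of_id hA h] at this
    exact this
  have hA0 : A 0 = 0 := (OO1_of_id h).zero_at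
  have hca : ContDiffAt ℝ (⊤:ℕ∞) A 0 := ContDiff.contDiffAt hA
  have hn : ((⊤:ℕ∞) : WithTop ℕ∞) ≠ 0 := by simp
  set e := hca.toOpenPartialHomeomorph A hd hn with he
  have hinv : ContDiffAt ℝ (⊤:ℕ∞) e.symm 0 := by
    have := hca.to_localInverse hd hn
    rw [hA0] at this
    exact this
  have h0 : (0:E) ∈ e.target := by
    have := hca.image_mem_toOpenPartialHomeomorph_target hd hn
    rwa [hA0] at this
  have hr : ∀ᶠ p in 𝓝 (0:E), A (e.symm p) = p := by
    filter_upwards [e.open_target.mem_nhds h0] with p hp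
    exact e.right_inv hp
  -- globalise
  obtain ⟨u, hu, hcu⟩ : ∃ u ∈ 𝓝 (0:E), ContDiffOn ℝ (⊤:ℕ∞) e.symm u := by
    have hsm : ContDiffOn ℝ (⊤:ℕ∞) e.symm (e.target ∩ e.symm ⁻¹' (interior {x | ∃ e' : E ≃L[ℝ] E, HasFDerivAt A (e' : E →L[ℝ] E) x})) := by
      intro x hx
      obtain ⟨e', he'⟩ := interior_subset hx.2
      exact (e.contDiffAt_symm hx.1 he' (ContDiff.contDiffAt hA)).contDiffWithinAt
    refine ⟨_, ?_, hsm⟩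
    have hs0 : e.symm 0 = 0 := by
      have : e.symm (A 0) = 0 := e.left_inv (hca.mem_toOpenPartialHomeomorph_source hd hn)
      rwa [hA0] at this
    refine inter_mem (e.open_target.mem_nhds h0) (hinv.continuousAt.preimage_mem_nhds ?_)
    rw [hs0, interior_mem_nhds]
    have hcont : ContinuousAt (fderiv ℝ A) 0 := (ContDiff.continuous (SM.fderiv hA)).continuousAt
    have := hcont.preimage_mem_nhds (t := Set.range ((↑) : (E ≃L[ℝ] E) → (E →L[ℝ] E))) (by
      rw [hd.fderiv]; exact ContinuousLinearEquiv.nhds _)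
    filter_upwards [this] with x hx
    obtain ⟨e', he'⟩ := hx
    refine ⟨e', ?_⟩
    rw [he']
    exact (hA.diff x).hasFDerivAt
  obtain ⟨τ, hτ, hτe⟩ : ∃ τ : E → E, SM τ ∧ ∀ᶠ p in 𝓝 0, τ p = e.symm p := by
    exact globalise hu hcu
  have hτA : ∀ᶠ p in 𝓝 0, A (τ p) = p := by
    filter_upwards [hr, hτe] with p h1 h2
    rw [h2, h1]
  have hτ0 : τ 0 = 0 := by
    rw [hτe.self_of_nhds]
    have : e.symm (A 0) = 0 := e.left_inv (hca.mem_toOpenPartialHomeomorph_source hd hn)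
    rwa [hA0] at this
  have hτ1 : OO 1 τ := OO_of_iter hτ fun k hk => by
    obtain rfl : k = 0 := by omega
    ext; simp [hτ0]
  refine ⟨τ, hτ, ?_, hτA⟩
  refine (h.comp1 hτ1).neg.congr' ?_
  filter_upwards [hτA] with p hp
  rw [hp]; abel
end tang


theorem fderiv_comp_i {g : E4 → E4} {p : E4} (h : DifferentiableAt ℝ g p) (i : Fin 4) (u : E4) :
    fderiv ℝ g p u i = fderiv ℝ (fun x => g x i) p u := by
  rw [((hasFDerivAt_pi'.1 h.hasFDerivAt) i).fderiv]; rfl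

theorem fderiv_coord (p u : E4) (i : Fin 4) : fderiv ℝ (fun x : E4 => x i) p u = u i := by
  have := (ContinuousLinearMap.proj (R := ℝ) (φ := fun _ : Fin 4 => ℝ) i).hasFDerivAt (x := p)
  have e : fderiv ℝ (fun x : E4 => x i) p = _ := this.fderiv
  rw [e]; rfl

theorem fderiv_coord_add {h : E4 → ℝ} (hh : SM h) (p u : E4) (i : Fin 4) :
    fderiv ℝ (fun x : E4 => x i + h x) p u = u i + fderiv ℝ h p u := by
  rw [fderiv_fun_add (differentiableAt_apply i p) (hh.diff p), add_apply, fderiv_coord]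

theorem al_be_omega {σ : E4 → ℝ} (h : SM σ) (p u v : E4) :
    omega0 (fderiv ℝ (al σ) p u) (fderiv ℝ (al σ) p v) =
    omega0 (fderiv ℝ (be σ) p u) (fderiv ℝ (be σ) p v) := by
  have hH : ∀ i u, fderiv ℝ (pd i σ) p u = fderiv ℝ (fderiv ℝ σ) p u (Pi.single i 1) := by
    intro i u
    have h1 := (SM.diff (SM.fderiv h) p).hasFDerivAt
    have h2 : HasFDerivAt (pd i σ) _ p := h1.clm_apply (hasFDerivAt_const (Pi.single i 1 : E4) p)
    rw [h2.fderiv]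
    simp
  have hsymm : fderiv ℝ (fderiv ℝ σ) p u v = fderiv ℝ (fderiv ℝ σ) p v u := by
    have : IsSymmSndFDerivAt ℝ σ p := (ContDiff.contDiffAt (SM.ofNat h 2)).isSymmSndFDerivAt (by simp)
    exact this u v
  rw [clm_expand (fderiv ℝ (fderiv ℝ σ) p u) v, clm_expand (fderiv ℝ (fderiv ℝ σ) p v) u] at hsymm
  have ha := (al_SM h).diff p
  have hb := (be_SM h).diff p
  have a0 : ∀ u, fderiv ℝ (al σ) p u 0 = u 0 := fun u => by
    rw [fderiv_comp_i ha]; exact fderiv_coord p u 0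
  have a1 : ∀ u, fderiv ℝ (al σ) p u 1 = u 1 + fderiv ℝ (pd 0 σ) p u := fun u => by
    rw [fderiv_comp_i ha]; exact fderiv_coord_add (h.pd 0) p u 1
  have a2 : ∀ u, fderiv ℝ (al σ) p u 2 = u 2 := fun u => by
    rw [fderiv_comp_i ha]; exact fderiv_coord p u 2
  have a3 : ∀ u, fderiv ℝ (al σ) p u 3 = u 3 + fderiv ℝ (pd 2 σ) p u := fun u => by
    rw [fderiv_comp_i ha]; exact fderiv_coord_add (h.pd 2) p u 3
  have b1 : ∀ u, fderiv ℝ (be σ) p u 1 = u 1 := fun u => by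
    rw [fderiv_comp_i hb]; exact fderiv_coord p u 1
  have b0 : ∀ u, fderiv ℝ (be σ) p u 0 = u 0 + fderiv ℝ (pd 1 σ) p u := fun u => by
    rw [fderiv_comp_i hb]; exact fderiv_coord_add (h.pd 1) p u 0
  have b3 : ∀ u, fderiv ℝ (be σ) p u 3 = u 3 := fun u => by
    rw [fderiv_comp_i hb]; exact fderiv_coord p u 3
  have b2 : ∀ u, fderiv ℝ (be σ) p u 2 = u 2 + fderiv ℝ (pd 3 σ) p u := fun u => by
    rw [fderiv_comp_i hb]; exact fderiv_coord_add (h.pd 3) p u 2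
  simp only [omega0, a0, a1, a2, a3, b0, b1, b2, b3, hH]
  linear_combination hsymm

theorem exists_tau {σ : E4 → ℝ} (h : SM σ) (ho : OO 3 σ) :
    ∃ τ : E4 → E4, SM τ ∧ OO 2 (fun p => τ p - p) ∧ (∀ᶠ p in 𝓝 0, al σ (τ p) = p) ∧
      ∀ᶠ p in 𝓝 0, ∀ u v, omega0 (fderiv ℝ (fun x => be σ (τ x)) p u) (fderiv ℝ (fun x => be σ (τ x)) p v)
        = omega0 u v := by
  obtain ⟨τ, hτ, hτ2, hi⟩ := exists_inv (al_SM h) (al_id h ho)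
  refine ⟨τ, hτ, hτ2, hi, ?_⟩
  filter_upwards [hi.eventually_nhds] with p hp u v
  have e1 : fderiv ℝ (fun x => be σ (τ x)) p = (fderiv ℝ (be σ) (τ p)).comp (fderiv ℝ τ p) :=
    fderiv_comp p ((be_SM h).diff _) (hτ.diff p)
  have e2 : fderiv ℝ (fun x => al σ (τ x)) p = (fderiv ℝ (al σ) (τ p)).comp (fderiv ℝ τ p) :=
    fderiv_comp p ((al_SM h).diff _) (hτ.diff p)
  have e3 : fderiv ℝ (fun x => al σ (τ x)) p = ContinuousLinearMap.id ℝ E4 := by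
    have : (fun x => al σ (τ x)) =ᶠ[𝓝 p] fun x => x := hp
    rw [this.fderiv_eq, fderiv_fun_id]
  have e4 : ∀ w, fderiv ℝ (al σ) (τ p) (fderiv ℝ τ p w) = w := fun w => by
    have := congrArg (fun L : E4 →L[ℝ] E4 => L w) (e2.symm.trans e3)
    simpa using this
  rw [e1]
  simp only [ContinuousLinearMap.comp_apply]
  rw [← al_be_omega h, e4, e4]

theorem chi_id {σ : E4 → ℝ} (h : SM σ) (ho : OO 3 σ) {τ : E4 → E4} (hτ2 : OO 2 (fun p => τ p - p)) :
    OO 2 (fun p => be σ (τ p) - p) :=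
  (((be_id h ho).comp1 (OO1_of_id hτ2)).add hτ2).congr' (Eventually.of_forall fun p => by abel)

/-- residual -/
def RR (f : E4 → ℝ) (G : E2 → ℝ) (σ : E4 → ℝ) (p : E4) : ℝ := f (be σ p) - G (qmap (al σ p))

theorem RR_SM {f : E4 → ℝ} {G : E2 → ℝ} {σ : E4 → ℝ} (hf : SM f) (hG : SM G) (hσ : SM σ) : SM (RR f G σ) :=
  ContDiff.sub (ContDiff.comp hf (be_SM hσ)) (ContDiff.comp hG (ContDiff.comp qmap_SM (al_SM hσ)))

theorem Gq_SM {G : E2 → ℝ} (hG : SM G) : SM (fun p => G (qmap p)) := ContDiff.comp hG qmap_SM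

theorem Gq_OO {g : E2 → ℝ} {M : ℕ} (h : OO M g) : OO (2 * M) (fun p => g (qmap p)) :=
  h.comp qmap_OO (OO.tendsto (N := 1) qmap_OO)

/-- exact quadratic identity -/
def QI (qi : E4 → ℝ) (v : E4 → E4) : Prop := ∀ σ s, SM σ → SM s → ∀ p,
  qi (be (fun x => σ x + s x) p) - qi (be σ p) - (qi (al (fun x => σ x + s x) p) - qi (al σ p))
    = - fderiv ℝ s p (v p)

theorem QI1 : QI q1 v1 := by
  intro σ s hσ hs p
  rw [clm_expand (fderiv ℝ s p)]
  simp only [q1, be, al, pd_add hσ hs, v1]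
  simp [pd]
  ring

theorem QI2 : QI q2 v2 := by
  intro σ s hσ hs p
  rw [clm_expand (fderiv ℝ s p)]
  simp only [q2, be, al, pd_add hσ hs, v2]
  simp [pd]
  ring

theorem step_one {N : ℕ} (hN : 3 ≤ N) {f qi : E4 → ℝ} {G g : E2 → ℝ} {σ s r : E4 → ℝ} {v : E4 → E4}
    (hqi : SM qi) (hQ : QI qi v) (hf : SM f) (of : OO 3 (fun p => f p - qi p)) (hG : SM G)
    (oG : OO 3 (fun p => G (qmap p) - qi p)) (hσ : SM σ) (oσ : OO 3 σ) (hs : SM s) (os : OO N s)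
    (hg : SM g) (og : OO N (fun p => g (qmap p)))
    (hr : OO (N+1) (fun p => RR f G σ p - r p))
    (hre : ∀ p, r p = g (qmap p) + fderiv ℝ s p (v p)) :
    OO (N+1) (RR f (fun y => G y + g y) (fun x => σ x + s x)) := by
  have hσ' : SM (fun x => σ x + s x) := ContDiff.add hσ hs
  have oσ' : OO 3 (fun x => σ x + s x) := oσ.add (os.mono hN)
  obtain ⟨n, rfl⟩ : ∃ n, N = n + 1 := ⟨N - 1, by omega⟩
  have dσ : OO (n+1) (fun x => (fun x => σ x + s x) x - σ x) := os.congr' (Eventually.of_forall fun p => by simp)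
  have t1 := OO.comp_sub (ContDiff.sub hf hqi : SM (fun p => f p - qi p)) (OO.fderiv of (ContDiff.sub hf hqi))
    (OO1_of_id (be_id hσ' oσ')) (OO1_of_id (be_id hσ oσ)) (be_diff hσ' hσ dσ)
  have t2 := OO.comp_sub (ContDiff.sub (Gq_SM hG) hqi : SM (fun p => G (qmap p) - qi p))
    (OO.fderiv oG (ContDiff.sub (Gq_SM hG) hqi))
    (OO1_of_id (al_id hσ' oσ')) (OO1_of_id (al_id hσ oσ)) (al_diff hσ' hσ dσ)
  have t3 := OO.comp_sub (Gq_SM hg) (OO.fderiv og (Gq_SM hg))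
    (OO1_of_id (al_id hσ' oσ')) OO_id (al_id hσ' oσ')
  have e : 2 + n = n + 1 + 1 := by omega
  rw [e] at t1 t2
  refine (((hr.add t1).sub t2).sub t3).congr' (Eventually.of_forall fun p => ?_)
  have := hQ σ s hσ hs p
  have h2 := hre p
  simp only [RR]
  linear_combination -this - h2

/-- Leading term. -/
theorem exists_lead {N : ℕ} {R : E4 → ℝ} (hR : SM R) (h : OO N R) :
    ∃ (r : E4 → ℝ) (P : MvPolynomial (Fin 4) ℂ), P.IsHomogeneous N ∧ (∀ p, (r p : ℂ) = ev P p) ∧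
      SM r ∧ (∀ (t : ℝ) p, r (t • p) = t ^ N • r p) ∧ OO (N+1) (fun p => R p - r p) := by
  have h1 := taylor_lead hR N (iter_of_OO N ℝ hR h)
  obtain ⟨P, hP, he⟩ := poly_of_multilinear ((N.factorial : ℝ)⁻¹ • iteratedFDeriv ℝ N R 0)
  set r : E4 → ℝ := fun y => (N.factorial : ℝ)⁻¹ • iteratedFDeriv ℝ N R 0 (fun _ => y) with hrdef
  have hre : ∀ p, (r p : ℂ) = ev P p := fun p => by rw [← he p]; rfl
  have hr : r = fun p => (ev P p).re := by ext p; rw [← hre p, Complex.ofReal_re]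
  refine ⟨r, P, hP, hre, ?_, ?_, h1⟩
  · rw [hr]; exact Complex.reCLM.contDiff.comp (ev_SM P)
  · intro t p
    rw [hr]
    dsimp only
    rw [ev_hom hP, ← Complex.ofReal_pow, Complex.re_ofReal_mul, smul_eq_mul]

theorem lin_SM (i : Fin 2) : SM (fun y : E2 => y i) := contDiff_apply ℝ ℝ i

/-- Triple of approximations. -/
def St (f1 f2 : E4 → ℝ) (N : ℕ) (X : (E4 → ℝ) × (E2 → ℝ) × (E2 → ℝ)) : Prop :=
  SM X.1 ∧ SM X.2.1 ∧ SM X.2.2 ∧ OO 3 X.1 ∧ OO 2 (fun y => X.2.1 y - y 0) ∧ OO 2 (fun y => X.2.2 y - y 1) ∧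
  OO N (RR f1 X.2.1 X.1) ∧ OO N (RR f2 X.2.2 X.1)

/-- Homogeneous correction. -/
def Good (N : ℕ) (Y : (E4 → ℝ) × (E2 → ℝ) × (E2 → ℝ)) : Prop :=
  SM Y.1 ∧ SM Y.2.1 ∧ SM Y.2.2 ∧ (∀ (t : ℝ) p, Y.1 (t • p) = t ^ N • Y.1 p) ∧
      (∀ (t : ℝ) y, Y.2.1 (t • y) = t ^ (N / 2) • Y.2.1 y) ∧
      (∀ (t : ℝ) y, Y.2.2 (t • y) = t ^ (N / 2) • Y.2.2 y) ∧
      (¬ Even N → Y.2.1 = 0) ∧ (¬ Even N → Y.2.2 = 0)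

theorem good_g {N : ℕ} (hN : 3 ≤ N) {g : E2 → ℝ} (hg : SM g) (gh : ∀ (t : ℝ) y, g (t • y) = t ^ (N / 2) • g y)
    (go : ¬ Even N → g = 0) : OO 2 g ∧ OO N (fun p => g (qmap p)) := by
  by_cases hE : Even N
  · obtain ⟨m, rfl⟩ := hE
    have e : (m + m) / 2 = m := by omega
    rw [e] at gh
    have h := OO_of_hom (ContDiff.continuous hg) gh
    refine ⟨h.mono (by omega), ?_⟩
    have := Gq_OO h
    rwa [two_mul] at this
  · rw [go hE]
    exact ⟨OO_const_zero 2, OO_const_zero N⟩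

theorem step {f1 f2 : E4 → ℝ} (hf1 : SM f1) (hf2 : SM f2) (o1 : OO 3 (fun p => f1 p - q1 p))
    (o2 : OO 3 (fun p => f2 p - q2 p)) (hc : ∀ᶠ p in 𝓝 0, pois f1 f2 p = 0) {N : ℕ} (hN : 3 ≤ N)
    (X : (E4 → ℝ) × (E2 → ℝ) × (E2 → ℝ)) (hX : St f1 f2 N X) :
    ∃ Y, Good N Y ∧ St f1 f2 (N+1) (X + Y) := by
  obtain ⟨σ, G1, G2⟩ := X
  obtain ⟨hσ, hG1, hG2, oσ, oG1, oG2, oR1, oR2⟩ := hX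
  dsimp only at hσ hG1 hG2 oσ oG1 oG2 oR1 oR2
  obtain ⟨r1, P1, hP1, e1, hr1, rh1, l1⟩ := exists_lead (RR_SM hf1 hG1 hσ) oR1
  obtain ⟨r2, P2, hP2, e2, hr2, rh2, l2⟩ := exists_lead (RR_SM hf2 hG2 hσ) oR2
  obtain ⟨τ, hτ, oτ, hi, hω⟩ := exists_tau hσ oσ
  have k1 : OO 3 (fun p => G1 (qmap p) - q1 p) := (Gq_OO oG1).mono (by norm_num)
  have k2 : OO 3 (fun p => G2 (qmap p) - q2 p) := (Gq_OO oG2).mono (by norm_num)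
  have hχ : SM (fun p => be σ (τ p)) := ContDiff.comp (be_SM hσ) hτ
  have oχ := chi_id hσ oσ oτ
  have hF : ∀ᶠ p in 𝓝 0, pois (fun x => f1 (be σ (τ x))) (fun x => f2 (be σ (τ x))) p = 0 := by
    have ht : Tendsto (fun p => be σ (τ p)) (𝓝 0) (𝓝 0) := OO.tendsto (N := 0) (OO1_of_id oχ)
    filter_upwards [hω, ht.eventually hc] with p hp hp2
    rw [pois_comp (χ := fun x => be σ (τ x)) (hf1.diff _) (hf2.diff _) (hχ.diff p) hp]
    exact hp2
  have hee : ∀ (f : E4 → ℝ) (G : E2 → ℝ) (r : E4 → ℝ), SM f → SM G → SM r → 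
      (∀ (t : ℝ) p, r (t • p) = t ^ N • r p) → OO (N+1) (fun p => RR f G σ p - r p) →
      OO (N+1) (fun p => f (be σ (τ p)) - G (qmap p) - r p) := by
    intro f G r hf hG hr rh l
    obtain ⟨n, rfl⟩ : ∃ n, N = n + 1 := ⟨N - 1, by omega⟩
    have a1 := l.comp1 (OO1_of_id oτ)
    have or : OO (n+1) r := OO_of_hom (ContDiff.continuous hr) rh
    have a2 := OO.comp_sub hr (OO.fderiv or hr) (OO1_of_id oτ) OO_id oτ
    refine (a1.add a2).congr' ?_
    filter_upwards [hi] with p hp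
    simp only [RR, hp]
    ring
  have hcomp := compat hN hr1 hr2 rh1 rh2 (ContDiff.comp hf1 hχ) (ContDiff.comp hf2 hχ)
    (Gq_SM hG1) (Gq_SM hG2) (pois_Gq hG1 hG2) k1 k2 (hee f1 G1 r1 hf1 hG1 hr1 rh1 l1)
    (hee f2 G2 r2 hf2 hG2 hr2 rh2 l2) hF
  obtain ⟨s, g1, g2, hs, hg1, hg2, sh, gh1, gh2, go1, go2, d1, d2⟩ := homological hP1 hP2 e1 e2 hcomp
  have os : OO N s := OO_of_hom (ContDiff.continuous hs) sh
  obtain ⟨c1, c1'⟩ := good_g hN hg1 gh1 go1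
  obtain ⟨c2, c2'⟩ := good_g hN hg2 gh2 go2
  refine ⟨(s, g1, g2), ⟨hs, hg1, hg2, sh, gh1, gh2, go1, go2⟩, ContDiff.add hσ hs, ContDiff.add hG1 hg1,
    ContDiff.add hG2 hg2, oσ.add (os.mono hN), ?_, ?_, ?_, ?_⟩
  · exact (oG1.add c1).congr' (Eventually.of_forall fun y => by simp; ring)
  · exact (oG2.add c2).congr' (Eventually.of_forall fun y => by simp; ring)
  · exact step_one hN q1_SM QI1 hf1 o1 hG1 k1 hσ oσ hs os hg1 c1' l1 d1
  · exact step_one hN q2_SM QI2 hf2 o2 hG2 k2 hσ oσ hs os hg2 c2' l2 d2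


theorem exists_seq {f1 f2 : E4 → ℝ} (hf1 : SM f1) (hf2 : SM f2) (o1 : OO 3 (fun p => f1 p - q1 p))
    (o2 : OO 3 (fun p => f2 p - q2 p)) (hc : ∀ᶠ p in 𝓝 0, pois f1 f2 p = 0) :
    ∃ Y : ℕ → (E4 → ℝ) × (E2 → ℝ) × (E2 → ℝ), (∀ k, Good k (Y k)) ∧ (∀ k < 3, Y k = 0) ∧
      ∀ n, St f1 f2 (n+3) ((0, (fun y => y 0), (fun y => y 1)) + ∑ k ∈ Finset.range (n+3), Y k) := by
  classical
  have hstep : ∀ (n : ℕ) (X : (E4 → ℝ) × (E2 → ℝ) × (E2 → ℝ)), ∃ Y, St f1 f2 (n+3) X →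
      Good (n+3) Y ∧ St f1 f2 (n+3+1) (X + Y) := by
    intro n X
    by_cases h : St f1 f2 (n+3) X
    · obtain ⟨Y, hY⟩ := step hf1 hf2 o1 o2 hc (by omega : 3 ≤ n+3) X h
      exact ⟨Y, fun _ => hY⟩
    · exact ⟨0, fun h' => absurd h' h⟩
  choose S hS using hstep
  set X0 : (E4 → ℝ) × (E2 → ℝ) × (E2 → ℝ) := (0, (fun y => y 0), (fun y => y 1)) with hX0
  let X : ℕ → (E4 → ℝ) × (E2 → ℝ) × (E2 → ℝ) := fun n => Nat.rec X0 (fun n x => x + S n x) n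
  have hXs : ∀ n, X (n+1) = X n + S n (X n) := fun n => rfl
  have hX : ∀ n, St f1 f2 (n+3) (X n) := by
    intro n
    induction n with
    | zero =>
      change St f1 f2 3 X0
      refine ⟨contDiff_const, lin_SM 0, lin_SM 1, OO_const_zero 3, ?_, ?_, ?_, ?_⟩
      · exact (OO_const_zero 2).congr' (Eventually.of_forall fun y => by simp [hX0])
      · exact (OO_const_zero 2).congr' (Eventually.of_forall fun y => by simp [hX0])
      · refine o1.congr' (Eventually.of_forall fun p => ?_)
        have e1 := be_zero p
        have e2 := al_zero p
        simp only [RR, hX0]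
        change _ = f1 (be (fun _ => 0) p) - qmap (al (fun _ => 0) p) 0
        rw [e1, e2]; rfl
      · refine o2.congr' (Eventually.of_forall fun p => ?_)
        have e1 := be_zero p
        have e2 := al_zero p
        simp only [RR, hX0]
        change _ = f2 (be (fun _ => 0) p) - qmap (al (fun _ => 0) p) 1
        rw [e1, e2]; rfl
    | succ n ih =>
      rw [hXs]
      exact (hS n (X n) ih).2
  refine ⟨fun k => if k < 3 then 0 else S (k - 3) (X (k - 3)), ?_, ?_, ?_⟩
  · intro k
    by_cases h : k < 3
    · simp only [h, if_true]
      refine ⟨contDiff_const, contDiff_const, contDiff_const, ?_, ?_, ?_, fun _ => rfl, fun _ => rfl⟩ <;>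
        intro t p <;> simp
    · simp only [h, if_false]
      obtain ⟨n, rfl⟩ : ∃ n, k = n + 3 := ⟨k - 3, by omega⟩
      simp only [Nat.add_sub_cancel]
      exact (hS n (X n) (hX n)).1
  · intro k hk; simp [hk]
  · intro n
    convert hX n using 1
    induction n with
    | zero => 
      rw [Finset.sum_eq_zero]
      · simp; rfl
      · intro k hk
        have : k < 3 := by simpa using hk
        simp [this]
    | succ n ih =>
      rw [show n + 1 + 3 = (n + 3) + 1 by ring, Finset.sum_range_succ, ← add_assoc, ih, hXs]
      simp

theorem sum_even {V : Type} [AddCommMonoid V] (g : ℕ → V) (h : ∀ k, ¬ Even k → g k = 0) (M : ℕ) :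
    ∑ k ∈ Finset.range (2 * M), g k = ∑ m ∈ Finset.range M, g (2 * m) := by
  induction M with
  | zero => simp
  | succ M ih =>
    rw [show 2 * (M+1) = 2 * M + 1 + 1 by ring, Finset.sum_range_succ, Finset.sum_range_succ, ih,
      Finset.sum_range_succ, h (2 * M + 1) (by simp), add_zero]

/-- Stability of the residual. -/
theorem RR_stable {f : E4 → ℝ} {G G' : E2 → ℝ} {σ σ' : E4 → ℝ} (hf : SM f) (hG : SM G)
    (hσ : SM σ) (hσ' : SM σ') (oσ : OO 3 σ) (oσ' : OO 3 σ') {n M : ℕ} (hn : n ≤ 2 * M)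
    (d : OO (n+1) (fun x => σ x - σ' x)) (dG : OO M (fun y => G y - G' y)) (h : OO n (RR f G' σ')) :
    OO n (RR f G σ) := by
  have t1 := OO.comp_sub hf (OO_zero_of_continuous (ContDiff.continuous (SM.fderiv hf)))
    (OO1_of_id (be_id hσ oσ)) (OO1_of_id (be_id hσ' oσ')) (be_diff hσ hσ' d)
  have t2 := OO.comp_sub (Gq_SM hG) (OO_zero_of_continuous (ContDiff.continuous (SM.fderiv (Gq_SM hG))))
    (OO1_of_id (al_id hσ oσ)) (OO1_of_id (al_id hσ' oσ')) (al_diff hσ hσ' d)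
  have t3 := ((Gq_OO dG).mono hn).comp1 (OO1_of_id (al_id hσ' oσ'))
  rw [zero_add] at t1 t2
  refine (((h.add t1).sub t2).sub t3).congr' (Eventually.of_forall fun p => ?_)
  simp only [RR]
  ring

theorem core {f1 f2 : E4 → ℝ} (hf1 : SM f1) (hf2 : SM f2) (o1 : OO 3 (fun p => f1 p - q1 p))
    (o2 : OO 3 (fun p => f2 p - q2 p)) (hc : ∀ᶠ p in 𝓝 0, pois f1 f2 p = 0) :
    ∃ (χ : E4 → E4) (G1 G2 : E2 → ℝ), SM χ ∧ OO 2 (fun p => χ p - p) ∧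
      (∀ᶠ p in 𝓝 0, ∀ u v, omega0 (fderiv ℝ χ p u) (fderiv ℝ χ p v) = omega0 u v) ∧
      SM G1 ∧ SM G2 ∧ OO 2 (fun y => G1 y - y 0) ∧ OO 2 (fun y => G2 y - y 1) ∧
      (∀ N, OO N (fun p => f1 (χ p) - G1 (qmap p))) ∧ (∀ N, OO N (fun p => f2 (χ p) - G2 (qmap p))) := by
  obtain ⟨Y, hY, hY0, hSt⟩ := exists_seq hf1 hf2 o1 o2 hc
  obtain ⟨σ, hσ, dσ⟩ := borel_series (fun k => (Y k).1) (fun k => (hY k).1) (fun k => (hY k).2.2.2.1)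
  have hb : ∀ g : ℕ → E2 → ℝ, (∀ k, SM (g k)) → (∀ k (t : ℝ) y, g k (t • y) = t ^ (k / 2) • g k y) →
      (∀ k, ¬ Even k → g k = 0) → (∀ k < 3, g k = 0) → ∀ i : Fin 2, ∃ G : E2 → ℝ, SM G ∧ OO 2 (fun y => G y - y i) ∧
      ∀ M, OO M (fun y => G y - (y i + ∑ k ∈ Finset.range (2 * M), g k y)) := by
    intro g hg gh go g0 i
    obtain ⟨γ, hγ, dγ⟩ := borel_series (fun m => g (2 * m)) (fun m => hg _) (fun m t y => by
      rw [gh]; congr 2; omega)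
    have key : ∀ M, OO M (fun y => (y i + γ y) - (y i + ∑ k ∈ Finset.range (2 * M), g k y)) := by
      intro M
      refine (dγ M).congr' (Eventually.of_forall fun y => ?_)
      rw [sum_even (fun k => g k y) (fun k hk => by rw [go k hk]; rfl)]
      ring
    refine ⟨fun y => y i + γ y, ContDiff.add (lin_SM i) hγ, ?_, key⟩
    refine (key 2).congr' (Eventually.of_forall fun y => ?_)
    have : ∑ k ∈ Finset.range (2 * 2), g k y = 0 := by
      refine Finset.sum_eq_zero fun k hk => ?_
      have hk' : k < 4 := by simpa using hk
      by_cases h3 : k < 3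
      · rw [g0 k h3]; rfl
      · obtain rfl : k = 3 := by omega
        rw [go 3 (by decide)]; rfl
    rw [this]; ring
  obtain ⟨G1, hG1, oG1, dG1⟩ := hb (fun k => (Y k).2.1) (fun k => (hY k).2.1) (fun k => (hY k).2.2.2.2.1)
    (fun k => (hY k).2.2.2.2.2.2.1) (fun k hk => by rw [hY0 k hk]; rfl) 0
  obtain ⟨G2, hG2, oG2, dG2⟩ := hb (fun k => (Y k).2.2) (fun k => (hY k).2.2.1) (fun k => (hY k).2.2.2.2.2.1)
    (fun k => (hY k).2.2.2.2.2.2.2) (fun k hk => by rw [hY0 k hk]; rfl) 1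
  have oσ : OO 3 σ := by
    refine (dσ 3).congr' (Eventually.of_forall fun p => ?_)
    rw [Finset.sum_eq_zero, sub_zero]
    intro k hk
    rw [hY0 k (by simpa using hk)]; rfl
  have main : ∀ n, OO n (RR f1 G1 σ) ∧ OO n (RR f2 G2 σ) := by
    intro n
    obtain ⟨sσ', -, -, oσ', -, -, r1, r2⟩ := hSt (2 * n + 1)
    have eM : 2 * n + 1 + 3 = 2 * (n + 2) := by ring
    have d : OO (n+1) (fun x => σ x - ((0, (fun y => y 0), (fun y => y 1)) +
        ∑ k ∈ Finset.range (2 * n + 1 + 3), Y k : (E4 → ℝ) × (E2 → ℝ) × (E2 → ℝ)).1 x) := by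
      refine ((dσ (2 * n + 1 + 3)).mono (by omega)).congr' (Eventually.of_forall fun p => ?_)
      simp [Prod.fst_sum, Finset.sum_apply]
    constructor
    · refine RR_stable hf1 hG1 hσ sσ' oσ oσ' (M := n+2) (by omega) d ?_ (r1.mono (by omega))
      refine (dG1 (n+2)).congr' (Eventually.of_forall fun y => ?_)
      rw [eM]
      simp [Prod.fst_sum, Prod.snd_sum, Finset.sum_apply]
    · refine RR_stable hf2 hG2 hσ sσ' oσ oσ' (M := n+2) (by omega) d ?_ (r2.mono (by omega))
      refine (dG2 (n+2)).congr' (Eventually.of_forall fun y => ?_)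
      rw [eM]
      simp [Prod.fst_sum, Prod.snd_sum, Finset.sum_apply]
  obtain ⟨τ, hτ, oτ, hi, hω⟩ := exists_tau hσ oσ
  refine ⟨fun p => be σ (τ p), G1, G2, ContDiff.comp (be_SM hσ) hτ, chi_id hσ oσ oτ, hω, hG1, hG2, oG1, oG2,
    fun N => ?_, fun N => ?_⟩
  · refine ((main N).1.comp1 (OO1_of_id oτ)).congr' ?_
    filter_upwards [hi] with p hp
    simp only [RR, hp]
  · refine ((main N).2.comp1 (OO1_of_id oτ)).congr' ?_
    filter_upwards [hi] with p hp
    simp only [RR, hp]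

/-- local injectivity -/
theorem locally_inj {E : Type} [NormedAddCommGroup E] [NormedSpace ℝ E] [CompleteSpace E] {A : E → E} (hA : SM A)
    (e : E ≃L[ℝ] E) (h : fderiv ℝ A 0 = e) : ∃ u ∈ 𝓝 (0:E), Set.InjOn A u := by
  have hd : HasStrictFDerivAt A (e : E →L[ℝ] E) 0 := by
    rw [← h]
    exact (ContDiff.contDiffAt hA).hasStrictFDerivAt (by simp)
  exact ⟨_, hd.toOpenPartialHomeomorph A |>.open_source.mem_nhds hd.mem_toOpenPartialHomeomorph_source,
    (hd.toOpenPartialHomeomorph A).injOn⟩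


/-- The linear equivalence with matrix `((a,b),(c,d))`. -/
def matEquiv (a b c d : ℝ) (h : a * d - b * c ≠ 0) : E2 ≃L[ℝ] E2 :=
  LinearEquiv.toContinuousLinearEquiv
  { toFun := fun v => ![a * v 0 + b * v 1, c * v 0 + d * v 1]
    map_add' := by intro x y; ext i; fin_cases i <;> simp <;> ring
    map_smul' := by intro t x; ext i; fin_cases i <;> simp <;> ring
    invFun := fun w => ![(d * w 0 - b * w 1) * (a * d - b * c)⁻¹, (a * w 1 - c * w 0) * (a * d - b * c)⁻¹]
    left_inv := by
      intro x; ext i; fin_cases i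
      · simp; linear_combination (x 0) * (mul_inv_cancel₀ h)
      · simp; linear_combination (x 1) * (mul_inv_cancel₀ h)
    right_inv := by
      intro x; ext i; fin_cases i
      · simp; linear_combination (x 0) * (mul_inv_cancel₀ h)
      · simp; linear_combination (x 1) * (mul_inv_cancel₀ h) }

theorem matEquiv_apply (a b c d : ℝ) (h : a * d - b * c ≠ 0) (v : E2) :
    matEquiv a b c d h v = ![a * v 0 + b * v 1, c * v 0 + d * v 1] := rfl

theorem OO.const_mul {E : Type} [NormedAddCommGroup E] [NormedSpace ℝ E] {g : E → ℝ} {N : ℕ} (h : OO N g) (a : ℝ) :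
    OO N (fun x => a * g x) := IsBigO.const_mul_left h a

theorem pd_lin {f g : E4 → ℝ} (hf : SM f) (hg : SM g) (a b : ℝ) (i : Fin 4) (p : E4) :
    pd i (fun x => a * f x + b * g x) p = a * pd i f p + b * pd i g p := by
  rw [pd_add (ContDiff.mul contDiff_const hf) (ContDiff.mul contDiff_const hg)]
  unfold pd
  rw [fderiv_const_mul (hf.diff p), fderiv_const_mul (hg.diff p)]
  rfl

/-- **Smooth Birkhoff normal form modulo a flat term.**
If `F = (f₁,f₂)` commute and have independent focus-focus quadratic parts at `0`,
then there exist a local symplectomorphism `χ` of `(ℝ⁴,0)` tangent to the identity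
and a smooth local diffeomorphism `G̃` of `(ℝ²,0)` with derivative `((a,b),(c,d))`
at `0`, such that `F∘χ − G̃∘(q₁,q₂)` is flat at the origin. -/
theorem smooth_birkhoff_modulo_flat
    (f1 f2 : E4 → ℝ) (U : Set E4) (hUopen : IsOpen U) (hU0 : (0:E4) ∈ U)
    (hs1 : ContDiffOn ℝ (⊤ : ℕ∞) f1 U) (hs2 : ContDiffOn ℝ (⊤ : ℕ∞) f2 U)
    (hcomm : ∀ p ∈ U, pois f1 f2 p = 0)
    (a b c d : ℝ) (hdet : a * d - b * c ≠ 0)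
    (hO1 : ∀ n < 3, iteratedFDeriv ℝ n (fun p => f1 p - (a * q1 p + b * q2 p)) 0 = 0)
    (hO2 : ∀ n < 3, iteratedFDeriv ℝ n (fun p => f2 p - (c * q1 p + d * q2 p)) 0 = 0) :
    ∃ (χ : E4 → E4) (G : E2 → E2) (V : Set E4) (W : Set E2),
      IsOpen V ∧ (0:E4) ∈ V ∧ ContDiffOn ℝ (⊤ : ℕ∞) χ V ∧ Set.InjOn χ V ∧
      χ 0 = 0 ∧ fderiv ℝ χ 0 = ContinuousLinearMap.id ℝ E4 ∧
      (∀ p ∈ V, ∀ u v : E4,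
        omega0 (fderiv ℝ χ p u) (fderiv ℝ χ p v) = omega0 u v) ∧
      IsOpen W ∧ (0:E2) ∈ W ∧ ContDiffOn ℝ (⊤ : ℕ∞) G W ∧ Set.InjOn G W ∧ G 0 = 0 ∧
      (∀ v : E2, fderiv ℝ G 0 v = ![a * v 0 + b * v 1, c * v 0 + d * v 1]) ∧
      flatAt (fun p : E4 => (![f1 (χ p), f2 (χ p)] : E2) - G (qmap p)) 0 := by
  obtain ⟨F1, hF1, hE1⟩ := globalise (hUopen.mem_nhds hU0) hs1
  obtain ⟨F2, hF2, hE2⟩ := globalise (hUopen.mem_nhds hU0) hs2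
  have OF1 : OO 3 (fun p => F1 p - (a * q1 p + b * q2 p)) := by
    refine OO_of_iter (ContDiff.sub hF1 (ContDiff.add (contDiff_const.mul q1_SM) (contDiff_const.mul q2_SM))) fun k hk => ?_
    rw [← hO1 k hk]
    refine Filter.EventuallyEq.eq_of_nhds (Filter.EventuallyEq.iteratedFDeriv ℝ ?_ k)
    filter_upwards [hE1] with p hp
    rw [hp]
  have OF2 : OO 3 (fun p => F2 p - (c * q1 p + d * q2 p)) := by
    refine OO_of_iter (ContDiff.sub hF2 (ContDiff.add (contDiff_const.mul q1_SM) (contDiff_const.mul q2_SM))) fun k hk => ?_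
    rw [← hO2 k hk]
    refine Filter.EventuallyEq.eq_of_nhds (Filter.EventuallyEq.iteratedFDeriv ℝ ?_ k)
    filter_upwards [hE2] with p hp
    rw [hp]
  have hcF : ∀ᶠ p in 𝓝 0, pois F1 F2 p = 0 := by
    filter_upwards [hE1.eventually_nhds, hE2.eventually_nhds, hUopen.mem_nhds hU0] with p h1 h2 hp
    have e1 : fderiv ℝ F1 p = fderiv ℝ f1 p := Filter.EventuallyEq.fderiv_eq h1
    have e2 : fderiv ℝ F2 p = fderiv ℝ f2 p := Filter.EventuallyEq.fderiv_eq h2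
    rw [← hcomm p hp, pois_eq_br, pois_eq_br, e1, e2]
  set D := a * d - b * c with hD
  have sh1 : SM (fun p => (d / D) * F1 p + (- b / D) * F2 p) :=
    ContDiff.add (contDiff_const.mul hF1) (contDiff_const.mul hF2)
  have sh2 : SM (fun p => (- c / D) * F1 p + (a / D) * F2 p) :=
    ContDiff.add (contDiff_const.mul hF1) (contDiff_const.mul hF2)
  obtain ⟨χ, G1, G2, hχ, oχ, hω, hG1, hG2, oG1, oG2, fl1, fl2⟩ := core sh1 sh2
    (((OF1.const_mul (d / D)).add (OF2.const_mul (- b / D))).congr' (Eventually.of_forall fun p => by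
      field_simp
      rw [hD]; ring))
    (((OF1.const_mul (- c / D)).add (OF2.const_mul (a / D))).congr' (Eventually.of_forall fun p => by
      field_simp
      rw [hD]; ring))
    (by
      filter_upwards [hcF] with p hp
      unfold pois at hp ⊢
      simp only [pd_lin hF1 hF2]
      linear_combination ((d / D) * (a / D) - (b / D) * (c / D)) * hp)
  have hfχ : fderiv ℝ χ 0 = ContinuousLinearMap.id ℝ E4 := fderiv_of_id hχ oχ
  obtain ⟨u, hu, hinj⟩ := locally_inj hχ (ContinuousLinearEquiv.refl ℝ E4) hfχ
  set G : E2 → E2 := fun y => ![a * G1 y + b * G2 y, c * G1 y + d * G2 y] with hG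
  have sG : SM G := by
    refine contDiff_pi.2 fun i => ?_
    fin_cases i
    · exact ContDiff.add (contDiff_const.mul hG1) (contDiff_const.mul hG2)
    · exact ContDiff.add (contDiff_const.mul hG1) (contDiff_const.mul hG2)
  have oG : OO 2 (fun y => G y - matEquiv a b c d hdet y) := by
    refine OO_pi fun i => ?_
    fin_cases i
    · refine ((oG1.const_mul a).add (oG2.const_mul b)).congr' (Eventually.of_forall fun y => ?_)
      simp [hG, matEquiv_apply]; ring
    · refine ((oG1.const_mul c).add (oG2.const_mul d)).congr' (Eventually.of_forall fun y => ?_)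
      simp [hG, matEquiv_apply]; ring
  have hfG : fderiv ℝ G 0 = (matEquiv a b c d hdet : E2 →L[ℝ] E2) := by
    have h1 := (OO.fderiv oG (ContDiff.sub sG (matEquiv a b c d hdet).contDiff)).zero_at
    rw [fderiv_fun_sub (sG.diff 0) (matEquiv a b c d hdet).differentiableAt, sub_eq_zero,
      ContinuousLinearEquiv.fderiv] at h1
    exact h1
  have hG0 : G 0 = 0 := by
    have := OO.zero_at (N := 1) oG
    simpa using this
  obtain ⟨w, hw, hinjG⟩ := locally_inj sG _ hfG
  have hχ0 : χ 0 = 0 := (OO1_of_id oχ).zero_at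
  obtain ⟨V, hV, hVo, hV0⟩ := mem_nhds_iff.1 (inter_mem hu hω)
  obtain ⟨W, hW, hWo, hW0⟩ := mem_nhds_iff.1 hw
  refine ⟨χ, G, V, W, hVo, hV0, ContDiff.contDiffOn hχ, hinj.mono fun x hx => (hV hx).1, hχ0, hfχ,
    fun p hp => (hV hp).2, hWo, hW0, ContDiff.contDiffOn sG, hinjG.mono hW, hG0, ?_, ?_⟩
  · intro v
    rw [hfG]
    rfl
  · intro n
    have hflat : SM (fun p : E4 => (![F1 (χ p), F2 (χ p)] : E2) - G (qmap p)) := by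
      refine ContDiff.sub (contDiff_pi.2 fun i => ?_) (ContDiff.comp sG qmap_SM)
      fin_cases i
      · have := ContDiff.comp hF1 hχ
        exact this
      · have := ContDiff.comp hF2 hχ
        exact this
    have hOOn : OO (n+1) (fun p : E4 => (![F1 (χ p), F2 (χ p)] : E2) - G (qmap p)) := by
      refine OO_pi fun i => ?_
      fin_cases i
      · refine (((fl1 (n+1)).const_mul a).add ((fl2 (n+1)).const_mul b)).congr'
          (Eventually.of_forall fun p => ?_)
        simp [hG]; field_simp; rw [hD]; ring
      · refine (((fl1 (n+1)).const_mul c).add ((fl2 (n+1)).const_mul d)).congr'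
          (Eventually.of_forall fun p => ?_)
        simp [hG]; field_simp; rw [hD]; ring
    rw [← iter_of_OO (n+1) E2 hflat hOOn n (Nat.lt_succ_self n)]
    refine Filter.EventuallyEq.eq_of_nhds (Filter.EventuallyEq.iteratedFDeriv ℝ ?_ n)
    have ht : Tendsto χ (𝓝 0) (𝓝 0) := OO.tendsto (N := 0) (OO1_of_id oχ)
    filter_upwards [ht.eventually hE1, ht.eventually hE2] with p h1 h2
    rw [h1, h2]
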